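/- arXiv:2507.01529 — 3 statements merged into one kernel-verified Lean document; each statement's English description precedes it below -/
import Mathlib

section
/- Let k ≥ 0 and n ≥ 0 be integers, and let p₁, p₂, …, p_{k+1} be primes such that pᵢ ≥ 5 and pᵢ ≢ 1 (mod 6) for each 1 ≤ i ≤ k+1. Then for every positive integer j with j ≢ 0 (mod p_{k+1}), we have B̄_{2,9}( 18·p₁²p₂²⋯p_{k+1}²·n + (6j + p_{k+1})·3·p₁²p₂²⋯p_k²·p_{k+1} ) ≡ 0 (mod 3). -/
/-- `biregOverpartitions l1 l2 n` is the number of `(l1, l2)`-biregular overpartitions of `n`: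
overpartitions of `n` (partitions in which the first occurrence of each part size may be
overlined) none of whose parts is divisible by `l1` or by `l2`.  Each partition of `n` with
admissible parts contributes `2 ^ (number of distinct part sizes)` overpartitions,
corresponding to the choice of which part sizes have their first occurrence overlined. -/
def biregOverpartitions (l1 l2 n : ℕ) : ℕ :=
  ∑ p : Nat.Partition n,
    if ∀ x ∈ p.parts, ¬ l1 ∣ x ∧ ¬ l2 ∣ x then 2 ^ p.parts.toFinset.card else 0

/-!
Write `O = ∏ (1 + q ^ m) / (1 - q ^ m)` for the overpartition series and
`φ(q) = ∑ q ^ (k ^ 2)` for the theta series. Gauss's identity says `O(q) φ(-q) = 1`, and it follows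
from Shanks's finite version by letting `n → ∞`. Inclusion-exclusion gives the series `G` of
`(2, 9)`-biregular overpartitions as `O(q) O(q ^ 18) / (O(q ^ 2) O(q ^ 9))`; since
`f(q ^ 3) = f(q) ^ 3` modulo `3` and `O(q) O(-q) = O(q ^ 2) ^ 2`, this becomes
`G φ(q) ^ 4 = φ(-q) ^ 4` modulo `3`.

Modulo `3` the coefficients of `φ(q) ^ 4 = φ(q) φ(q ^ 3)` count the representations by
`x ^ 2 + 3 y ^ 2`. For even `n ≠ 0` multiplication by a cube root of unity permutes these without
fixed points, so `φ(q) ^ 4 + φ(-q) ^ 4 = 2`, that is, `(G + 1) φ ^ 4 = 2`. Multiplying by `φ ^ 2`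
and extracting the exponents divisible by `3`, where `φ(q) ^ 2` contributes `φ(q ^ 3) ^ 2` because
`x ^ 2 + y ^ 2` is anisotropic modulo `3`, yields `∑ B(3 n) q ^ n + 1 = 2 φ ^ 4`. Hence `3 ∣ B(3 M)`
whenever `M` is not of the form `x ^ 2 + 3 y ^ 2`, in particular when a prime `p ≡ 5` modulo `6`
divides `M` to an odd power.
-/

open PowerSeries Finset

section Gauss

variable {R : Type*} [CommRing R]

/-- The partial sum `∑_{|k| ≤ n} (-1) ^ k * q ^ (k ^ 2)` of the theta series at `-q`. -/
noncomputable def altThetaSum (q : R) (n : ℕ) : R :=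
  ∑ k ∈ Icc (-n : ℤ) n, (-1) ^ k.natAbs * q ^ (k.natAbs ^ 2)

/-- The summands in Shanks's finite form of Gauss's product formula for the theta series. -/
def shanksTerm (q : R) (n s : ℕ) : R :=
  (-q ^ (n + 1)) ^ s * (∏ k ∈ range s, (1 + q ^ k)) * ∏ k ∈ Ico (s + 1) (n + 1), (1 - q ^ k)

lemma altThetaSum_succ (q : R) (n : ℕ) :
    altThetaSum q (n + 1) = altThetaSum q n + 2 * (-1) ^ (n + 1) * q ^ ((n + 1) ^ 2) := by
  have natAbs_succ : ((n : ℤ) + 1).natAbs = n + 1 := by omega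
  have natAbs_neg_succ : (-((n : ℤ) + 1)).natAbs = n + 1 := by omega
  rw [altThetaSum, Nat.cast_succ, Icc_succ_succ, sum_union (by simp), sum_pair (by lia),
    natAbs_succ, natAbs_neg_succ, altThetaSum]
  ring

theorem prod_one_add_pow_mul_altThetaSum (q : R) (n : ℕ) :
    (∏ k ∈ range n, (1 + q ^ (k + 1))) * altThetaSum q n =
      ∑ s ∈ range (n + 1), shanksTerm q n s := by
  induction n with
  | zero => simp [altThetaSum, shanksTerm]
  | succ n ih =>
    let boundary (s : ℕ) : R :=
      (-q ^ (n + 1)) ^ s * (∏ k ∈ range s, (1 + q ^ k)) * ∏ k ∈ Ico s (n + 1), (1 - q ^ k)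
    have step (s : ℕ) (hs : s ∈ range (n + 1)) :
        shanksTerm q (n + 1) s - (1 + q ^ (n + 1)) * shanksTerm q n s =
          boundary (s + 1) - boundary s := by
      have hs : s < n + 1 := mem_range.1 hs
      simp only [shanksTerm, boundary]
      rw [prod_Ico_succ_top (by omega) (fun k ↦ 1 - q ^ k), prod_range_succ,
        prod_eq_prod_Ico_succ_bot hs]
      ring
    have boundary_zero : boundary 0 = 0 := by simp [boundary, prod_range_succ']
    have telescope := sum_congr rfl step
    rw [sum_range_sub, boundary_zero, sub_zero, sum_sub_distrib, ← mul_sum, ← ih,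
      sub_eq_iff_eq_add] at telescope
    rw [sum_range_succ, telescope, altThetaSum_succ, prod_range_succ]
    have prod_eq (m : ℕ) :
        ∏ k ∈ range (m + 1), (1 + q ^ k) = 2 * ∏ k ∈ range m, (1 + q ^ (k + 1)) := by
      rw [prod_range_succ']
      ring
    simp only [boundary, shanksTerm, Ico_self, prod_empty, prod_eq]
    ring

lemma pow_dvd_shanksTerm (q : R) {n s : ℕ} (hs : s ≠ 0) : q ^ (n + 1) ∣ shanksTerm q n s :=
  (((dvd_neg.2 dvd_rfl).trans (dvd_pow_self _ hs)).mul_right _).mul_right _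

lemma pow_dvd_prod_mul_altThetaSum_sub_prod (q : R) (n : ℕ) :
    q ^ (n + 1) ∣ (∏ k ∈ range n, (1 + q ^ (k + 1))) * altThetaSum q n -
      ∏ k ∈ range n, (1 - q ^ (k + 1)) := by
  have shanksTerm_zero : shanksTerm q n 0 = ∏ k ∈ range n, (1 - q ^ (k + 1)) := by
    simp [shanksTerm, prod_Ico_eq_prod_range, add_comm]
  rw [prod_one_add_pow_mul_altThetaSum, sum_range_succ', shanksTerm_zero, add_sub_cancel_right]
  exact dvd_sum fun s _ ↦ pow_dvd_shanksTerm q s.succ_ne_zero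

end Gauss

section Theta

variable (R : Type*) [CommRing R]

/-- Ramanujan's theta series `φ(q) = ∑ q ^ (k ^ 2)`, summed over all integers `k`. -/
noncomputable def theta : R⟦X⟧ :=
  PowerSeries.mk fun n ↦ ({k : ℤ | k ^ 2 = n}.ncard : R)

/-- The representations of `n` by the binary form `a x ^ 2 + b y ^ 2`. -/
def diagReps (a b n : ℕ) : Set (ℤ × ℤ) := {v | a * v.1 ^ 2 + b * v.2 ^ 2 = n}

lemma finite_setOf_mul_sq_eq {a : ℕ} (ha : a ≠ 0) (n : ℕ) : {k : ℤ | a * k ^ 2 = n}.Finite := by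
  refine (Set.finite_Icc (-n : ℤ) n).subset fun k hk ↦ ?_
  have le_sq : (k.natAbs : ℤ) ≤ k ^ 2 := Int.natAbs_le_self_sq k
  have sq_le : k ^ 2 ≤ a * k ^ 2 := le_mul_of_one_le_left (sq_nonneg k)
    (by exact_mod_cast ha.bot_lt)
  simp only [Set.mem_ofPred_eq, Set.mem_Icc] at hk ⊢
  omega

lemma coeff_expand_theta {a : ℕ} (ha : a ≠ 0) (n : ℕ) :
    coeff n (expand a ha (theta R)) = ({k : ℤ | a * k ^ 2 = n}.ncard : R) := by
  by_cases h : a ∣ n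
  · obtain ⟨m, rfl⟩ := h
    simp [coeff_expand_mul, theta, ha]
  · rw [coeff_expand_of_not_dvd _ _ _ h]
    have no_solutions : {k : ℤ | a * k ^ 2 = n} = ∅ := Set.eq_empty_of_forall_notMem fun k hk ↦
      h (Int.natCast_dvd_natCast.1 ⟨_, hk.symm⟩)
    simp [no_solutions]

lemma ncard_diagReps {a b : ℕ} (ha : a ≠ 0) (hb : b ≠ 0) (n : ℕ) :
    (diagReps a b n).ncard = ∑ m ∈ antidiagonal n,
      {x : ℤ | a * x ^ 2 = m.1}.ncard * {y : ℤ | b * y ^ 2 = m.2}.ncard := by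
  let S (m : ℕ × ℕ) : Finset (ℤ × ℤ) :=
    (finite_setOf_mul_sq_eq ha m.1).toFinset ×ˢ (finite_setOf_mul_sq_eq hb m.2).toFinset
  have mem_S (m : ℕ × ℕ) (v : ℤ × ℤ) : v ∈ S m ↔ a * v.1 ^ 2 = m.1 ∧ b * v.2 ^ 2 = m.2 := by
    simp [S]
  have diagReps_eq : diagReps a b n = ((antidiagonal n).biUnion S : Finset (ℤ × ℤ)) := by
    ext v
    simp only [diagReps, Set.mem_ofPred_eq, coe_biUnion, Set.mem_iUnion, mem_coe, mem_S,
      HasAntidiagonal.mem_antidiagonal, exists_prop]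
    refine ⟨fun h ↦ ⟨(a * v.1.natAbs ^ 2, b * v.2.natAbs ^ 2), ?_, by simp⟩, ?_⟩
    · zify
      simpa using h
    · rintro ⟨m, hm, h_fst, h_snd⟩
      rw [h_fst, h_snd, ← hm, Nat.cast_add]
  have disjoint_S : (antidiagonal n : Set (ℕ × ℕ)).PairwiseDisjoint S := fun m _ m' _ hne ↦
    disjoint_left.2 fun v hv hv' ↦ hne <| by
      rw [mem_S] at hv hv'
      exact Prod.ext (by exact_mod_cast hv.1.symm.trans hv'.1)
        (by exact_mod_cast hv.2.symm.trans hv'.2)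
  rw [diagReps_eq, Set.ncard_coe_finset, card_biUnion disjoint_S]
  simp only [S, card_product, Set.ncard_eq_toFinset_card _ (finite_setOf_mul_sq_eq ha _),
    Set.ncard_eq_toFinset_card _ (finite_setOf_mul_sq_eq hb _)]

lemma coeff_expand_theta_mul_expand_theta {a b : ℕ} (ha : a ≠ 0) (hb : b ≠ 0) (n : ℕ) :
    coeff n (expand a ha (theta R) * expand b hb (theta R)) = ((diagReps a b n).ncard : R) := by
  simp [coeff_mul, coeff_expand_theta, ncard_diagReps ha hb]

/-- Ramanujan's `φ(-q)`. -/
noncomputable def altTheta : R⟦X⟧ := rescale (-1) (theta R)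

lemma rescale_altTheta : rescale (-1) (altTheta R) = theta R := by
  simp [altTheta, rescale_rescale]

end Theta

section Overpartitions

open scoped PowerSeries.WithPiTopology

/-- The series `∏ (1 + X ^ m) / (1 - X ^ m)`, over the positive integers `m` satisfying `P`, which
counts overpartitions with parts in `P`: a part size that occurs is either overlined or not. -/
noncomputable def overpartitionSeries (R : Type*) [CommRing R] (P : ℕ → Prop) [DecidablePred P] :
    R⟦X⟧ :=
  Nat.Partition.genFun fun i _ ↦ if P i then 2 else 0

/-- The series `(1 + X ^ m) / (1 - X ^ m)`, the contribution of the part size `m`. -/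
noncomputable def overpartitionFactor (R : Type*) [CommRing R] (m : ℕ) : R⟦X⟧ :=
  (1 + X ^ m) * invOfUnit (1 - X ^ m) 1

variable {R : Type*} [CommRing R]

lemma isUnit_one_sub_X_pow {m : ℕ} (hm : m ≠ 0) : IsUnit (1 - X ^ m : R⟦X⟧) := by
  simp [isUnit_iff_constantCoeff, hm]

lemma overpartitionFactor_mul_one_sub {m : ℕ} (hm : m ≠ 0) :
    overpartitionFactor R m * (1 - X ^ m) = 1 + X ^ m := by
  rw [overpartitionFactor, mul_assoc, invOfUnit_mul _ _ (by simp [hm]), mul_one]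

lemma expand_overpartitionFactor {a m : ℕ} (ha : a ≠ 0) (hm : m ≠ 0) :
    expand a ha (overpartitionFactor R m) = overpartitionFactor R (a * m) := by
  refine (isUnit_one_sub_X_pow (mul_ne_zero ha hm)).mul_right_cancel ?_
  rw [overpartitionFactor_mul_one_sub (mul_ne_zero ha hm)]
  simpa [← pow_mul] using
    congrArg (expand a ha) (overpartitionFactor_mul_one_sub (R := R) hm)

lemma rescale_neg_one_X_pow (m : ℕ) : rescale (-1) (X ^ m : R⟦X⟧) = (-1) ^ m * X ^ m := by
  simp [rescale_X, ← mul_pow]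

lemma rescale_overpartitionFactor_of_even {m : ℕ} (hm : Even m) (h0 : m ≠ 0) :
    rescale (-1) (overpartitionFactor R m) = overpartitionFactor R m := by
  have h := overpartitionFactor_mul_one_sub (R := R) h0
  refine (isUnit_one_sub_X_pow h0).mul_right_cancel ?_
  rw [h]
  simpa only [map_mul, map_sub, map_add, map_one, rescale_neg_one_X_pow, hm.neg_one_pow, one_mul]
    using congrArg (rescale (-1)) h

lemma overpartitionFactor_mul_rescale_of_odd {m : ℕ} (hm : Odd m) :
    overpartitionFactor R m * rescale (-1) (overpartitionFactor R m) = 1 := by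
  have h := overpartitionFactor_mul_one_sub (R := R) hm.pos.ne'
  have h' := congrArg (rescale (-1)) h
  simp only [map_mul, map_sub, map_add, map_one, rescale_neg_one_X_pow, hm.neg_one_pow, neg_one_mul,
    sub_neg_eq_add, ← sub_eq_add_neg] at h'
  refine (isUnit_one_sub_X_pow hm.pos.ne').mul_right_cancel ?_
  rw [mul_right_comm, h, mul_comm, h', one_mul]

lemma tsum_two_smul_X_pow [TopologicalSpace R] [T2Space R] [IsTopologicalRing R] {m : ℕ}
    (hm : m ≠ 0) :
    (1 + ∑' j, (2 : R) • (X : R⟦X⟧) ^ (m * (j + 1))) = overpartitionFactor R m := by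
  have summable_pow : Summable fun j ↦ ((X : R⟦X⟧) ^ m) ^ j :=
    WithPiTopology.summable_pow_of_constantCoeff_eq_zero (by simp [hm])
  have geometric : (∑' j, ((X : R⟦X⟧) ^ m) ^ j) * (1 - X ^ m) = 1 :=
    WithPiTopology.tsum_pow_mul_one_sub_of_constantCoeff_eq_zero (by simp [hm])
  refine (isUnit_one_sub_X_pow hm).mul_right_cancel ?_
  rw [overpartitionFactor_mul_one_sub hm]
  have factor : ∑' j, (2 : R) • (X : R⟦X⟧) ^ (m * (j + 1)) =
      2 * X ^ m * ∑' j, ((X : R⟦X⟧) ^ m) ^ j := by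
    rw [← summable_pow.tsum_mul_left]
    refine tsum_congr fun j ↦ ?_
    rw [smul_eq_C_mul, map_ofNat, pow_mul, pow_succ]
    ring
  rw [factor]
  linear_combination 2 * X ^ m * geometric

lemma hasProd_overpartitionSeries [TopologicalSpace R] [T2Space R] [IsTopologicalRing R]
    (P : ℕ → Prop) [DecidablePred P] :
    HasProd (fun i ↦ if P (i + 1) then overpartitionFactor R (i + 1) else 1)
      (overpartitionSeries R P) := by
  have factor_eq (i : ℕ) :
      1 + ∑' j, (if P (i + 1) then (2 : R) else 0) • (X : R⟦X⟧) ^ ((i + 1) * (j + 1)) =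
        if P (i + 1) then overpartitionFactor R (i + 1) else 1 := by
    split_ifs
    · exact tsum_two_smul_X_pow i.succ_ne_zero
    · simp
  have hasProd_genFun := Nat.Partition.hasProd_genFun (R := R) fun i _ ↦ if P i then 2 else 0
  simp only [factor_eq] at hasProd_genFun
  exact hasProd_genFun

lemma coeff_overpartitionSeries_biregular (a b n : ℕ) :
    coeff n (overpartitionSeries R fun i ↦ ¬ a ∣ i ∧ ¬ b ∣ i) =
      (biregOverpartitions a b n : R) := by
  rw [overpartitionSeries, Nat.Partition.coeff_genFun, biregOverpartitions, Nat.cast_sum]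
  refine sum_congr rfl fun p _ ↦ ?_
  rw [Finsupp.prod, Multiset.toFinsupp_support]
  split_ifs with h
  · rw [prod_congr rfl fun i hi ↦ if_pos (h i (Multiset.mem_toFinset.1 hi))]
    simp
  · obtain ⟨i, hi, not_admissible⟩ : ∃ i ∈ p.parts, ¬ (¬ a ∣ i ∧ ¬ b ∣ i) := by
      simpa only [not_forall, exists_prop] using h
    rw [Nat.cast_zero, prod_eq_zero (Multiset.mem_toFinset.2 hi) (if_neg not_admissible)]

lemma coeff_altThetaSum_X {m n : ℕ} (h : m ≤ n) :
    coeff m (altThetaSum (X : R⟦X⟧) n) = coeff m (altTheta R) := by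
  have sq_eq_iff (k : ℤ) : m = k.natAbs ^ 2 ↔ k ^ 2 = m := by
    rw [← Int.natAbs_sq k, eq_comm, ← Nat.cast_pow, Nat.cast_inj]
  have squares : {k : ℤ | k ^ 2 = m} = ({k ∈ Icc (-n : ℤ) n | k ^ 2 = m} : Finset ℤ) := by
    ext k
    have := Int.natAbs_le_self_sq k
    simp only [Set.mem_ofPred_eq, coe_filter, mem_Icc]
    omega
  have neg_one_pow_sq (k : ℕ) : (-1 : R) ^ (k ^ 2) = (-1) ^ k := by
    rcases k.even_or_odd with hk | hk
    · rw [hk.neg_one_pow, (hk.pow_of_ne_zero two_ne_zero).neg_one_pow]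
    · rw [hk.neg_one_pow, hk.pow.neg_one_pow]
  have coeff_term (k : ℤ) : coeff m ((-1) ^ k.natAbs * X ^ (k.natAbs ^ 2) : R⟦X⟧) =
      if k ^ 2 = m then (-1) ^ m else 0 := by
    rw [show ((-1) ^ k.natAbs : R⟦X⟧) = C ((-1) ^ k.natAbs) by simp, coeff_C_mul, coeff_X_pow,
      ← neg_one_pow_sq]
    simp only [← sq_eq_iff]
    split_ifs with hk <;> simp [hk]
  rw [altThetaSum, map_sum, sum_congr rfl fun k _ ↦ coeff_term k, ← sum_filter, sum_const,
    altTheta, coeff_rescale, theta, coeff_mk, squares, Set.ncard_coe_finset, nsmul_eq_mul,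
    mul_comm]

lemma tendsto_altThetaSum_X [TopologicalSpace R] :
    Filter.Tendsto (altThetaSum (X : R⟦X⟧)) Filter.atTop (nhds (altTheta R)) := by
  refine (WithPiTopology.tendsto_iff_coeff_tendsto _ _ _ _).2 fun m ↦
    tendsto_nhds_of_eventually_eq ?_
  filter_upwards [Filter.eventually_ge_atTop m] with n h using coeff_altThetaSum_X h

lemma X_pow_dvd_prod_overpartitionFactor_mul_altThetaSum_sub_one (n : ℕ) :
    X ^ (n + 1) ∣
      (∏ k ∈ range n, overpartitionFactor R (k + 1)) * altThetaSum (X : R⟦X⟧) n - 1 := by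
  have isUnit_prod : IsUnit (∏ k ∈ range n, (1 - X ^ (k + 1) : R⟦X⟧)) :=
    IsUnit.prod_iff.2 fun k _ ↦ isUnit_one_sub_X_pow k.succ_ne_zero
  have prod_mul : (∏ k ∈ range n, overpartitionFactor R (k + 1)) *
      ∏ k ∈ range n, (1 - X ^ (k + 1) : R⟦X⟧) = ∏ k ∈ range n, (1 + X ^ (k + 1)) := by
    rw [← prod_mul_distrib]
    exact prod_congr rfl fun k _ ↦ overpartitionFactor_mul_one_sub k.succ_ne_zero
  rw [← isUnit_prod.dvd_mul_right]
  convert pow_dvd_prod_mul_altThetaSum_sub_prod (X : R⟦X⟧) n using 1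
  rw [← prod_mul]
  ring

theorem overpartitionSeries_mul_altTheta :
    overpartitionSeries R (fun _ ↦ True) * altTheta R = 1 := by
  let _ : TopologicalSpace R := ⊥
  have : DiscreteTopology R := ⟨rfl⟩
  have tendsto_prod : Filter.Tendsto (fun n ↦ ∏ k ∈ range n, overpartitionFactor R (k + 1))
      Filter.atTop (nhds (overpartitionSeries R fun _ ↦ True)) := by
    simpa using (hasProd_overpartitionSeries (R := R) fun _ ↦ True).tendsto_prod_nat
  refine tendsto_nhds_unique (tendsto_prod.mul tendsto_altThetaSum_X)
    ((WithPiTopology.tendsto_iff_coeff_tendsto _ _ _ _).2 fun m ↦ tendsto_nhds_of_eventually_eq ?_)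
  filter_upwards [Filter.eventually_ge_atTop m] with n h
  rw [← sub_eq_zero, ← map_sub]
  exact X_pow_dvd_iff.1 (X_pow_dvd_prod_overpartitionFactor_mul_altThetaSum_sub_one n) m
    (by omega)

lemma continuous_of_continuous_coeff [TopologicalSpace R] {f : R⟦X⟧ → R⟦X⟧}
    (h : ∀ n, Continuous fun g ↦ coeff n (f g)) : Continuous f :=
  continuous_iff_continuousAt.2 fun g ↦
    (WithPiTopology.tendsto_iff_coeff_tendsto _ _ _ _).2 fun n ↦ (h n).tendsto g

lemma continuous_expand [TopologicalSpace R] {a : ℕ} (ha : a ≠ 0) :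
    Continuous (expand a ha : R⟦X⟧ → R⟦X⟧) := by
  refine continuous_of_continuous_coeff fun n ↦ ?_
  simp only [coeff_expand]
  split_ifs
  · exact WithPiTopology.continuous_coeff R _
  · exact continuous_const

lemma continuous_rescale [TopologicalSpace R] [IsTopologicalRing R] (c : R) :
    Continuous (rescale c : R⟦X⟧ → R⟦X⟧) := by
  refine continuous_of_continuous_coeff fun n ↦ ?_
  simp only [coeff_rescale]
  exact (WithPiTopology.continuous_coeff R n).const_mul _

lemma overpartitionSeries_congr {P Q : ℕ → Prop} [DecidablePred P] [DecidablePred Q]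
    (h : ∀ m, P m ↔ Q m) : overpartitionSeries R P = overpartitionSeries R Q := by
  simp only [overpartitionSeries, h]

lemma expand_overpartitionSeries {a : ℕ} (ha : a ≠ 0) :
    expand a ha (overpartitionSeries R fun _ ↦ True) = overpartitionSeries R (a ∣ ·) := by
  let _ : TopologicalSpace R := ⊥
  have : DiscreteTopology R := ⟨rfl⟩
  have succ_pred (i : ℕ) : a * (i + 1) - 1 + 1 = a * (i + 1) :=
    Nat.sub_add_cancel (Nat.mul_pos ha.bot_lt i.succ_pos)
  have injective : (fun i ↦ a * (i + 1) - 1).Injective := fun i j hij ↦ by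
    have := congrArg (· + 1) hij
    simpa [succ_pred, ha] using this
  have eq_one (i : ℕ) (hi : i ∉ Set.range fun i ↦ a * (i + 1) - 1) :
      (if a ∣ i + 1 then overpartitionFactor R (i + 1) else 1) = 1 := by
    refine if_neg fun ⟨m, hm⟩ ↦ hi ⟨m - 1, ?_⟩
    have hm0 : m ≠ 0 := by
      rintro rfl
      simp at hm
    simp only [Nat.sub_add_cancel (Nat.one_le_iff_ne_zero.2 hm0), ← hm, Nat.add_sub_cancel]
  refine HasProd.unique ?_
    ((injective.hasProd_iff eq_one).2 (hasProd_overpartitionSeries (R := R) (a ∣ ·)))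
  convert (hasProd_overpartitionSeries (R := R) fun _ ↦ True).map (expand a ha)
    (continuous_expand ha) using 1
  ext1 i
  simp [succ_pred, expand_overpartitionFactor ha i.succ_ne_zero]

lemma overpartitionSeries_mul_rescale :
    overpartitionSeries R (fun _ ↦ True) * rescale (-1) (overpartitionSeries R fun _ ↦ True) =
      overpartitionSeries R (2 ∣ ·) ^ 2 := by
  let _ : TopologicalSpace R := ⊥
  have : DiscreteTopology R := ⟨rfl⟩
  have all := hasProd_overpartitionSeries (R := R) fun _ ↦ True
  have even := hasProd_overpartitionSeries (R := R) (2 ∣ ·)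
  rw [sq]
  refine (all.mul (all.map (rescale (-1)) (continuous_rescale _))).unique ?_
  convert even.mul even using 1
  ext1 i
  rcases Nat.even_or_odd (i + 1) with h | h
  · simp [h.two_dvd, rescale_overpartitionFactor_of_even h i.succ_ne_zero]
  · simp [h.not_two_dvd_nat, overpartitionFactor_mul_rescale_of_odd h]

theorem overpartitionSeries_not_and_not_mul_mul (P Q : ℕ → Prop) [DecidablePred P]
    [DecidablePred Q] :
    overpartitionSeries R (fun m ↦ ¬ P m ∧ ¬ Q m) * overpartitionSeries R P *
        overpartitionSeries R Q =
      overpartitionSeries R (fun _ ↦ True) * overpartitionSeries R fun m ↦ P m ∧ Q m := by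
  let _ : TopologicalSpace R := ⊥
  have : DiscreteTopology R := ⟨rfl⟩
  have hasProd (S : ℕ → Prop) [DecidablePred S] := hasProd_overpartitionSeries (R := R) S
  refine (((hasProd _).mul (hasProd P)).mul (hasProd Q)).unique ?_
  convert (hasProd fun _ ↦ True).mul (hasProd fun m ↦ P m ∧ Q m) using 1
  ext1 i
  by_cases hP : P (i + 1) <;> by_cases hQ : Q (i + 1) <;> simp [hP, hQ]

lemma overpartitionSeries_biregular_mul_mul {a b : ℕ} (ha : a ≠ 0) (hb : b ≠ 0)
    (hab : a.Coprime b) :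
    overpartitionSeries R (fun m ↦ ¬ a ∣ m ∧ ¬ b ∣ m) *
        expand a ha (overpartitionSeries R fun _ ↦ True) *
        expand b hb (overpartitionSeries R fun _ ↦ True) =
      overpartitionSeries R (fun _ ↦ True) *
        expand (a * b) (mul_ne_zero ha hb) (overpartitionSeries R fun _ ↦ True) := by
  simp only [expand_overpartitionSeries]
  rw [overpartitionSeries_not_and_not_mul_mul, overpartitionSeries_congr fun m ↦
    (⟨fun h ↦ hab.mul_dvd_of_dvd_of_dvd h.1 h.2,
      fun h ↦ ⟨dvd_of_mul_right_dvd h, dvd_of_mul_left_dvd h⟩⟩ : a ∣ m ∧ b ∣ m ↔ a * b ∣ m)]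

end Overpartitions

section Dissection

variable {R : Type*} [CommRing R]

/-- The `m`-dissection `∑ a (m n) q ^ n` of the series `∑ a n q ^ n`. -/
noncomputable def dissect (m : ℕ) (f : R⟦X⟧) : R⟦X⟧ := PowerSeries.mk fun n ↦ coeff (m * n) f

lemma dissect_expand_mul {m : ℕ} (hm : m ≠ 0) (f g : R⟦X⟧) :
    dissect m (expand m hm f * g) = f * dissect m g := by
  ext n
  simp only [dissect, coeff_mk, coeff_mul]
  refine (sum_of_injOn (fun x ↦ (m * x.1, m * x.2)) (fun x _ y _ h ↦ ?_) (fun x hx ↦ ?_)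
    (fun x hx not_mem_image ↦ ?_) fun x _ ↦ by rw [coeff_expand_mul]).symm
  · simpa [hm, Prod.ext_iff] using h
  · simp only [mem_coe, HasAntidiagonal.mem_antidiagonal] at hx ⊢
    rw [← mul_add, hx]
  · rw [coeff_expand_of_not_dvd, zero_mul]
    intro dvd_fst
    have sum_eq := HasAntidiagonal.mem_antidiagonal.1 hx
    have dvd_snd : m ∣ x.2 := (Nat.dvd_add_right dvd_fst).1 (sum_eq ▸ dvd_mul_right m n)
    obtain ⟨⟨u, hu⟩, v, hv⟩ := dvd_fst, dvd_snd
    refine not_mem_image ⟨(u, v), ?_, by simp [← hu, ← hv]⟩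
    simp only [mem_coe, HasAntidiagonal.mem_antidiagonal]
    apply Nat.eq_of_mul_eq_mul_left hm.bot_lt
    rw [mul_add, ← hu, ← hv, sum_eq]

lemma dvd_of_dvd_sq_add_sq {p : ℕ} [Fact p.Prime] (hp : p % 4 = 3) {x y : ℤ}
    (h : (p : ℤ) ∣ x ^ 2 + y ^ 2) : (p : ℤ) ∣ x := by
  rw [← ZMod.intCast_zmod_eq_zero_iff_dvd] at h ⊢
  push_cast at h
  by_contra hx
  exact ZMod.mod_four_ne_three_of_sq_eq_neg_sq' hx
    (eq_neg_of_add_eq_zero_right h) hp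

lemma ncard_diagReps_one_one_mul {p : ℕ} [Fact p.Prime] (hp : p % 4 = 3) (n : ℕ) :
    (diagReps 1 1 (p * n)).ncard = (diagReps p p n).ncard := by
  have hp0 : (p : ℤ) ≠ 0 := by exact_mod_cast (Fact.out : p.Prime).ne_zero
  have image_eq : diagReps 1 1 (p * n) =
      (fun v : ℤ × ℤ ↦ (p * v.1, p * v.2)) '' diagReps p p n := by
    ext ⟨x, y⟩
    simp only [diagReps, Set.mem_ofPred_eq, Set.mem_image, Prod.exists, Prod.mk.injEq,
      Nat.cast_one, one_mul, Nat.cast_mul]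
    constructor
    · intro h
      obtain ⟨u, rfl⟩ : (p : ℤ) ∣ x := dvd_of_dvd_sq_add_sq hp (h ▸ dvd_mul_right _ _)
      obtain ⟨v, rfl⟩ : (p : ℤ) ∣ y :=
        dvd_of_dvd_sq_add_sq hp (add_comm (y ^ 2) _ ▸ h ▸ dvd_mul_right _ _)
      refine ⟨u, v, mul_left_cancel₀ hp0 ?_, rfl, rfl⟩
      linear_combination h
    · rintro ⟨u, v, h, rfl, rfl⟩
      linear_combination (p : ℤ) * h
  rw [image_eq, Set.ncard_image_of_injective]
  exact fun u v h ↦ by simpa [Int.natCast_ne_zero.1 hp0, Prod.ext_iff] using h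

theorem dissect_theta_sq {p : ℕ} [hp : Fact p.Prime] (h : p % 4 = 3) :
    dissect p (theta R ^ 2) = expand p hp.out.ne_zero (theta R) ^ 2 := by
  ext n
  rw [sq, sq, coeff_expand_theta_mul_expand_theta, ← ncard_diagReps_one_one_mul h,
    ← coeff_expand_theta_mul_expand_theta R one_ne_zero one_ne_zero]
  simp [dissect]

end Dissection

section Eisenstein

lemma dvd_ncard_of_iterate_eq {α : Type*} {S : Set α} {f : α → α} {p : ℕ} [Fact p.Prime]
    (mapsTo : Set.MapsTo f S S) (iterate_eq : ∀ x ∈ S, f^[p] x = x) (ne : ∀ x ∈ S, f x ≠ x) :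
    p ∣ S.ncard := by
  classical
  rcases S.finite_or_infinite with finite | infinite
  swap
  · simp [infinite.ncard]
  have := finite.fintype
  let g : Function.End S := mapsTo.restrict f S S
  have g_pow : g ^ p ^ 1 = 1 := by
    rw [pow_one]
    change (mapsTo.restrict f S S)^[p] = id
    rw [mapsTo.iterate_restrict]
    exact funext fun x ↦ Subtype.ext (iterate_eq x x.2)
  have isEmpty_fixedPoints : IsEmpty g.fixedPoints :=
    ⟨fun x ↦ ne _ x.1.2 (congrArg Subtype.val x.2)⟩
  have card_modEq := Equiv.Perm.card_fixedPoints_modEq g_pow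
  rwa [Fintype.card_eq_zero (α := g.fixedPoints), Nat.modEq_zero_iff_dvd,
    ← Nat.card_eq_fintype_card, Nat.card_coe_set_eq] at card_modEq

/-- Multiplication of `x + y √-3` by the primitive cube root of unity `(-1 + √-3) / 2`; the integer
divisions are exact when `x` and `y` have the same parity. -/
def mulOmega (v : ℤ × ℤ) : ℤ × ℤ := ((-v.1 - 3 * v.2) / 2, (v.1 - v.2) / 2)

lemma mulOmega_two_mul_add (w y : ℤ) : mulOmega (2 * w + y, y) = (-w - 2 * y, w) := by
  simp only [mulOmega, Prod.mk.injEq]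
  omega

lemma mulOmega_iterate_three (w y : ℤ) : mulOmega^[3] (2 * w + y, y) = (2 * w + y, y) := by
  simp only [Function.iterate_succ, Function.iterate_zero, Function.comp_apply, id_eq, mulOmega,
    Prod.mk.injEq]
  omega

theorem three_dvd_ncard_diagReps_of_even {n : ℕ} (hn : Even n) (h0 : n ≠ 0) :
    3 ∣ (diagReps 1 3 n).ncard := by
  have exists_eq {v : ℤ × ℤ} (hv : v ∈ diagReps 1 3 n) :
      ∃ w y, v = (2 * w + y, y) ∧ (2 * w + y) ^ 2 + 3 * y ^ 2 = n := by
    have norm_eq : v.1 ^ 2 + 3 * v.2 ^ 2 = n := by simpa [diagReps] using hv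
    have even_norm : Even (v.1 ^ 2 + 3 * v.2 ^ 2) := by
      rw [norm_eq]
      exact_mod_cast hn
    have even_sub : Even (v.1 - v.2) := by
      have not_even_three : ¬ Even (3 : ℤ) := by decide
      simp only [Int.even_add, Int.even_mul, Int.even_pow, Int.even_sub] at even_norm ⊢
      tauto
    obtain ⟨w, hw⟩ := even_sub
    have fst_eq : v.1 = 2 * w + v.2 := by omega
    exact ⟨w, v.2, Prod.ext fst_eq rfl, fst_eq ▸ norm_eq⟩
  refine dvd_ncard_of_iterate_eq (f := mulOmega) ?_ ?_ ?_ <;> intro v hv <;>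
    obtain ⟨w, y, rfl, norm_eq⟩ := exists_eq hv
  · rw [mulOmega_two_mul_add]
    simp only [diagReps, Set.mem_ofPred_eq]
    push_cast
    linear_combination norm_eq
  · exact mulOmega_iterate_three w y
  · rw [mulOmega_two_mul_add, Ne, Prod.mk.injEq]
    rintro ⟨_, _⟩
    obtain ⟨rfl, rfl⟩ : w = 0 ∧ y = 0 := by omega
    exact h0 (by simpa using norm_eq.symm)

end Eisenstein

section ModThree

lemma pow_char_eq_expand {p : ℕ} [hp : Fact p.Prime] (f : (ZMod p)⟦X⟧) :
    f ^ p = expand p hp.out.ne_zero f := by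
  have frobenius := MvPowerSeries.map_frobenius_expand p hp.out.ne_zero (f := f)
  rw [ZMod.frobenius_zmod] at frobenius
  rw [← frobenius]
  simp [PowerSeries.expand]

lemma rescale_overpartitionSeries_mul_theta {R : Type*} [CommRing R] :
    rescale (-1) (overpartitionSeries R fun _ ↦ True) * theta R = 1 := by
  simpa [rescale_altTheta] using congrArg (rescale (-1)) (overpartitionSeries_mul_altTheta (R := R))

theorem biregular_mul_theta_pow_four :
    overpartitionSeries (ZMod 3) (fun m ↦ ¬ 2 ∣ m ∧ ¬ 9 ∣ m) * theta (ZMod 3) ^ 4 =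
      altTheta (ZMod 3) ^ 4 := by
  have pow_nine_eq_expand (f : (ZMod 3)⟦X⟧) : expand 9 (by decide) f = f ^ 9 := by
    calc expand (3 * 3) _ f = (f ^ 3) ^ 3 := by
          rw [expand_mul, pow_char_eq_expand, pow_char_eq_expand]
      _ = f ^ 9 := (pow_mul f 3 3).symm
  have expand_eighteen (f : (ZMod 3)⟦X⟧) :
      expand (2 * 9) (by decide) f = expand 2 two_ne_zero f ^ 9 := by
    rw [← pow_nine_eq_expand, ← expand_mul]
  have biregular := overpartitionSeries_biregular_mul_mul (R := ZMod 3) two_ne_zero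
    (show 9 ≠ 0 by decide) (by decide)
  have mul_rescale := overpartitionSeries_mul_rescale (R := ZMod 3)
  have mul_altTheta := overpartitionSeries_mul_altTheta (R := ZMod 3)
  have rescale_mul_theta := rescale_overpartitionSeries_mul_theta (R := ZMod 3)
  rw [pow_nine_eq_expand, expand_eighteen] at biregular
  rw [← expand_overpartitionSeries two_ne_zero] at mul_rescale
  set G := overpartitionSeries (ZMod 3) fun m ↦ ¬ 2 ∣ m ∧ ¬ 9 ∣ m
  set O := overpartitionSeries (ZMod 3) fun _ ↦ True
  set O' := rescale (-1) O
  set E := expand 2 two_ne_zero O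
  set t := theta (ZMod 3)
  set s := altTheta (ZMod 3)
  calc G * t ^ 4 = G * (O * s) ^ 10 * (O' * t) * t ^ 4 := by
        rw [mul_altTheta, rescale_mul_theta]
        ring
    _ = G * O ^ 9 * (O * O') * s ^ 10 * t ^ 5 := by ring
    _ = (G * E * O ^ 9) * E * s ^ 10 * t ^ 5 := by
        rw [mul_rescale]
        ring
    _ = O * (E ^ 2) ^ 5 * s ^ 10 * t ^ 5 := by
        rw [biregular]
        ring
    _ = (O * s) ^ 6 * (O' * t) ^ 5 * s ^ 4 := by
        rw [← mul_rescale]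
        ring
    _ = s ^ 4 := by rw [mul_altTheta, rescale_mul_theta, one_pow, one_pow, one_mul, one_mul]

lemma coeff_theta_pow_four (n : ℕ) :
    coeff n (theta (ZMod 3) ^ 4) = ((diagReps 1 3 n).ncard : ZMod 3) := by
  rw [← coeff_expand_theta_mul_expand_theta _ one_ne_zero three_ne_zero, ← pow_char_eq_expand,
    expand_one_apply, ← pow_succ']

lemma coeff_altTheta_pow_four (n : ℕ) :
    coeff n (altTheta (ZMod 3) ^ 4) = (-1) ^ n * ((diagReps 1 3 n).ncard : ZMod 3) := by
  rw [altTheta, ← map_pow, coeff_rescale, coeff_theta_pow_four]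

lemma ncard_diagReps_zero {a b : ℕ} (ha : a ≠ 0) (hb : b ≠ 0) : (diagReps a b 0).ncard = 1 := by
  have diagReps_eq : diagReps a b 0 = {0} := by
    ext v
    simp only [diagReps, Set.mem_ofPred_eq, Nat.cast_zero, Set.mem_singleton_iff, Prod.ext_iff]
    rw [add_eq_zero_iff_of_nonneg (by positivity) (by positivity)]
    simp [ha, hb]
  rw [diagReps_eq, Set.ncard_singleton]

theorem altTheta_pow_four_add : altTheta (ZMod 3) ^ 4 + theta (ZMod 3) ^ 4 = 2 := by
  ext n
  rw [map_add, coeff_theta_pow_four, coeff_altTheta_pow_four,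
    ← map_ofNat C 2, coeff_C]
  rcases n.even_or_odd with even | odd
  · rcases eq_or_ne n 0 with rfl | h0
    · simp [ncard_diagReps_zero, one_add_one_eq_two]
    · simp [(ZMod.natCast_eq_zero_iff _ _).2 (three_dvd_ncard_diagReps_of_even even h0), h0]
  · simp [odd.neg_one_pow, odd.pos.ne']

theorem dissect_biregular_add_one :
    dissect 3 (overpartitionSeries (ZMod 3) (fun m ↦ ¬ 2 ∣ m ∧ ¬ 9 ∣ m) + 1) =
      2 * theta (ZMod 3) ^ 4 := by
  have isUnit_theta : IsUnit (theta (ZMod 3)) :=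
    IsUnit.of_mul_eq_one_right _ rescale_overpartitionSeries_mul_theta
  have mul_theta_pow_six :
      expand 3 three_ne_zero (theta (ZMod 3) ^ 2) *
        (overpartitionSeries (ZMod 3) (fun m ↦ ¬ 2 ∣ m ∧ ¬ 9 ∣ m) + 1) =
      expand 3 three_ne_zero 2 * theta (ZMod 3) ^ 2 := by
    rw [← pow_char_eq_expand, map_ofNat]
    linear_combination theta (ZMod 3) ^ 2 * (biregular_mul_theta_pow_four + altTheta_pow_four_add)
  have dissected := congrArg (dissect 3) mul_theta_pow_six
  rw [dissect_expand_mul, dissect_expand_mul, dissect_theta_sq (by decide),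
    ← pow_char_eq_expand] at dissected
  refine (isUnit_theta.pow 2).mul_left_cancel ?_
  linear_combination dissected

lemma natCast_biregOverpartitions_three_mul {M : ℕ} (hM : M ≠ 0) :
    (biregOverpartitions 2 9 (3 * M) : ZMod 3) = 2 * (diagReps 1 3 M).ncard := by
  have h := congrArg (coeff M) dissect_biregular_add_one
  rw [← map_ofNat C 2, coeff_C_mul, coeff_theta_pow_four, dissect, coeff_mk,
    map_add, coeff_overpartitionSeries_biregular, coeff_one] at h
  simpa [hM] using h

end ModThree

section Descent

lemma sq_ne_neg_three {p : ℕ} [Fact p.Prime] (hp2 : p ≠ 2) (hp3 : p % 3 = 2) (t : ZMod p) :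
    t ^ 2 ≠ -3 := by
  intro ht
  have natCast_ne_zero {r : ℕ} (hr : r.Prime) (hpr : p ≠ r) : (r : ZMod p) ≠ 0 := fun h ↦
    hpr ((Nat.prime_dvd_prime_iff_eq Fact.out hr).1 ((ZMod.natCast_eq_zero_iff _ _).1 h))
  have two_ne : (2 : ZMod p) ≠ 0 := natCast_ne_zero Nat.prime_two hp2
  have three_ne : (3 : ZMod p) ≠ 0 := natCast_ne_zero Nat.prime_three (by rintro rfl; simp at hp3)
  obtain ⟨w, rfl⟩ : ∃ w, t = 2 * w + 1 := ⟨(t - 1) / 2, by field_simp; ring⟩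
  have w_sq : w ^ 2 + w + 1 = 0 := by
    refine (mul_eq_zero_iff_left (pow_ne_zero 2 two_ne)).1 ?_
    linear_combination ht
  have w_cube : w ^ 3 = 1 := by linear_combination (w - 1) * w_sq
  have w_ne : w ≠ 0 := by
    rintro rfl
    simp at w_cube
  have coprime : Nat.Coprime 3 (p - 1) :=
    (Nat.Prime.coprime_iff_not_dvd Nat.prime_three).2 (by omega)
  have w_eq : w = 1 := orderOf_eq_one_iff.1 <| Nat.eq_one_of_dvd_coprimes coprime
    (orderOf_dvd_of_pow_eq_one w_cube) (ZMod.orderOf_dvd_card_sub_one w_ne)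
  refine three_ne ?_
  rw [w_eq] at w_sq
  linear_combination w_sq

lemma dvd_of_dvd_sq_add_three_mul_sq {p : ℕ} [Fact p.Prime] (hp2 : p ≠ 2) (hp3 : p % 3 = 2)
    {x y : ℤ} (h : (p : ℤ) ∣ x ^ 2 + 3 * y ^ 2) : (p : ℤ) ∣ x ∧ (p : ℤ) ∣ y := by
  rw [← ZMod.intCast_zmod_eq_zero_iff_dvd] at h
  rw [← ZMod.intCast_zmod_eq_zero_iff_dvd, ← ZMod.intCast_zmod_eq_zero_iff_dvd]
  push_cast at h
  have hy : (y : ZMod p) = 0 := by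
    by_contra hy
    refine sq_ne_neg_three hp2 hp3 ((x : ZMod p) / y) ?_
    rw [div_pow, div_eq_iff (pow_ne_zero 2 hy)]
    linear_combination h
  exact ⟨by simpa [hy] using h, hy⟩

theorem even_padicValNat_of_mem_diagReps {p : ℕ} [Fact p.Prime] (hp2 : p ≠ 2) (hp3 : p % 3 = 2)
    {n : ℕ} (h0 : n ≠ 0) {v : ℤ × ℤ} (hv : v ∈ diagReps 1 3 n) : Even (padicValNat p n) := by
  induction n using Nat.strong_induction_on generalizing v with
  | _ n ih =>
  have p_prime : p.Prime := Fact.out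
  obtain ⟨x, y⟩ := v
  have norm_eq : x ^ 2 + 3 * y ^ 2 = n := by simpa [diagReps] using hv
  by_cases hpn : p ∣ n
  swap
  · simp [padicValNat.eq_zero_of_not_dvd hpn]
  obtain ⟨⟨x, rfl⟩, y, rfl⟩ := dvd_of_dvd_sq_add_three_mul_sq hp2 hp3
    (norm_eq ▸ Int.natCast_dvd_natCast.2 hpn)
  obtain ⟨m, rfl⟩ : p ^ 2 ∣ n := by
    zify
    exact ⟨x ^ 2 + 3 * y ^ 2, by linear_combination -norm_eq⟩
  have hm : m ≠ 0 := right_ne_zero_of_mul h0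
  have mem : (x, y) ∈ diagReps 1 3 m := by
    have p_sq_ne : (p ^ 2 : ℤ) ≠ 0 := by exact_mod_cast left_ne_zero_of_mul h0
    simp only [diagReps, Set.mem_ofPred_eq]
    push_cast at norm_eq ⊢
    refine mul_left_cancel₀ p_sq_ne ?_
    linear_combination norm_eq
  have lt : m < p ^ 2 * m :=
    lt_mul_of_one_lt_left hm.bot_lt (Nat.one_lt_pow two_ne_zero p_prime.one_lt)
  rw [padicValNat.mul (left_ne_zero_of_mul h0) hm, padicValNat.prime_pow]
  exact even_two.add (ih m lt hm mem)

theorem three_dvd_biregOverpartitions_of_odd_padicValNat {p : ℕ} [Fact p.Prime] (hp2 : p ≠ 2)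
    (hp3 : p % 3 = 2) {M : ℕ} (odd : Odd (padicValNat p M)) :
    3 ∣ biregOverpartitions 2 9 (3 * M) := by
  have hM : M ≠ 0 := by
    rintro rfl
    simp at odd
  have diagReps_eq_empty : diagReps 1 3 M = ∅ := Set.eq_empty_of_forall_notMem fun _ hv ↦
    Nat.not_even_iff_odd.2 odd (even_padicValNat_of_mem_diagReps hp2 hp3 hM hv)
  rw [← ZMod.natCast_eq_zero_iff, natCast_biregOverpartitions_three_mul hM, diagReps_eq_empty]
  simp

lemma odd_padicValNat_sq_mul_mul {p P c : ℕ} [hp : Fact p.Prime] (hP : P ≠ 0) (hc : ¬ p ∣ c) :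
    Odd (padicValNat p (P ^ 2 * p * c)) := by
  have hc0 : c ≠ 0 := fun h ↦ hc (h ▸ dvd_zero p)
  rw [padicValNat.mul (mul_ne_zero (pow_ne_zero 2 hP) hp.out.ne_zero) hc0,
    padicValNat.mul (pow_ne_zero 2 hP) hp.out.ne_zero, padicValNat.pow, padicValNat_self,
    padicValNat.eq_zero_of_not_dvd hc]
  exact odd_two_mul_add_one _

end Descent

theorem B29_inf_family_mod3_general {P q : ℕ} (n j : ℕ) (hP : P ≠ 0) (hq : q.Prime)
    (hq5 : 5 ≤ q) (hq6 : q % 6 ≠ 1) (hj : ¬ q ∣ j) :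
    3 ∣ biregOverpartitions 2 9 (18 * (P ^ 2 * q ^ 2) * n + (6 * j + q) * 3 * P ^ 2 * q) := by
  have : Fact q.Prime := ⟨hq⟩
  have coprime_two : q.Coprime 2 := (Nat.coprime_primes hq Nat.prime_two).2 (by omega)
  have coprime_three : q.Coprime 3 := (Nat.coprime_primes hq Nat.prime_three).2 (by omega)
  have q_mod_three : q % 3 = 2 := by
    have not_three_dvd : ¬ 3 ∣ q := Nat.prime_three.coprime_iff_not_dvd.1 coprime_three.symm
    have not_two_dvd : ¬ 2 ∣ q := Nat.prime_two.coprime_iff_not_dvd.1 coprime_two.symm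
    omega
  have not_dvd : ¬ q ∣ q * (6 * n + 1) + 6 * j := by
    rwa [← Nat.dvd_add_iff_right (dvd_mul_right q _),
      (coprime_two.mul_right coprime_three : q.Coprime 6).dvd_mul_left]
  convert three_dvd_biregOverpartitions_of_odd_padicValNat (by omega) q_mod_three
    (odd_padicValNat_sq_mul_mul hP not_dvd) using 2
  ring

theorem B29_inf_family_mod3 (k n : ℕ) (p : Fin (k + 2) → ℕ)
    (hp : ∀ i, (p i).Prime ∧ 5 ≤ p i ∧ p i % 6 ≠ 1)
    (j : ℕ) (hj : 0 < j) (hjp : ¬ p (Fin.last (k + 1)) ∣ j) :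
    3 ∣ biregOverpartitions 2 9
      (18 * (∏ i, p i ^ 2) * n +
        (6 * j + p (Fin.last (k + 1))) * 3 * (∏ i : Fin (k + 1), p i.castSucc ^ 2) *
          p (Fin.last (k + 1))) := by
  obtain ⟨q_prime, five_le_q, q_mod_six⟩ := hp (Fin.last (k + 1))
  rw [Fin.prod_univ_castSucc, prod_pow]
  exact B29_inf_family_mod3_general n j (prod_ne_zero_iff.2 fun i _ ↦ (hp i.castSucc).1.ne_zero)
    q_prime five_le_q q_mod_six hjp
end

section
/- For all integers n ≥ 0, the number of (5,2)-biregular overpartitions of 4n+3 satisfies B̄_{5,2}(4n+3) ≡ 0 (mod 4). -/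
/-! Modulo `4`, the sum of `2 ^ (number of part sizes)` only sees the partitions of `N` into equal
parts, each with weight `2`; these are indexed by the divisors of `N` that are admissible parts. If
`l₁ ≡ 1` and `N ≡ 3` modulo `4`, then neither `N` nor `l₁ * N` is a square, so the involutions
`d ↦ N / d` of the divisors of `N` and `d ↦ l₁ * (N / d)` of those divisible by `l₁` have no fixed
point. Both sets, hence also their difference, are even in size. An even `l₂` excludes no divisor
of the odd number `N`. -/

open scoped Finset

/-- The partition of `n` into `n / d` parts equal to the divisor `d` of `n`. -/
def equalPartsPartition {n d : ℕ} (hd : d ∈ n.divisors) : n.Partition where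
  parts := Multiset.replicate (n / d) d
  parts_pos hi := Multiset.eq_of_mem_replicate hi ▸ Nat.pos_of_mem_divisors hd
  parts_sum := by
    rw [Multiset.sum_replicate, smul_eq_mul, Nat.div_mul_cancel (Nat.dvd_of_mem_divisors hd)]

theorem toFinset_parts_equalPartsPartition {n d : ℕ} (hd : d ∈ n.divisors) :
    (equalPartsPartition hd).parts.toFinset = {d} := by
  have hcard : n / d ≠ 0 := (Nat.div_pos (Nat.divisor_le hd) (Nat.pos_of_mem_divisors hd)).ne'
  calc (Multiset.replicate (n / d) d).toFinset
    _ = ((n / d) • {d} : Multiset ℕ).toFinset := by rw [Multiset.nsmul_singleton]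
    _ = {d} := by rw [Multiset.toFinset_nsmul _ _ hcard, Multiset.toFinset_singleton]

theorem exists_equalPartsPartition_eq {n d : ℕ} {p : n.Partition}
    (hp : p.parts.toFinset = {d}) :
    ∃ hd : d ∈ n.divisors, equalPartsPartition hd = p := by
  obtain ⟨hcard, hparts⟩ := (Multiset.toFinset_eq_singleton_iff _ _).1 hp
  rw [Multiset.nsmul_singleton] at hparts
  have hmem : d ∈ p.parts := Multiset.mem_toFinset.1 (hp ▸ Finset.mem_singleton_self d)
  have hsum : n = p.parts.card * d := by
    rw [← smul_eq_mul, ← Multiset.sum_replicate, ← hparts, p.parts_sum]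
  have hpos : 0 < d := p.parts_pos hmem
  have hd : d ∈ n.divisors :=
    Nat.mem_divisors.2 ⟨Dvd.intro_left _ hsum.symm, hsum ▸ mul_ne_zero hcard hpos.ne'⟩
  refine ⟨hd, Nat.Partition.ext ?_⟩
  calc Multiset.replicate (n / d) d
    _ = Multiset.replicate p.parts.card d := by rw [Nat.div_eq_of_eq_mul_left hpos hsum]
    _ = p.parts := hparts.symm

theorem card_filter_restricted_card_toFinset_parts_eq_one (n : ℕ) (P : ℕ → Prop)
    [DecidablePred P] :
    #{p ∈ Nat.Partition.restricted n P | p.parts.toFinset.card = 1} = #{d ∈ n.divisors | P d} := by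
  symm
  refine Finset.card_bij (fun d hd => equalPartsPartition (Finset.mem_filter.1 hd).1) ?_ ?_ ?_
  · intro d hd
    obtain ⟨hd, hP⟩ := Finset.mem_filter.1 hd
    refine Finset.mem_filter.2 ⟨Finset.mem_filter.2 ⟨Finset.mem_univ _, fun i hi => ?_⟩, ?_⟩
    · rwa [Multiset.eq_of_mem_replicate hi]
    · rw [toFinset_parts_equalPartsPartition, Finset.card_singleton]
  · intro d hd e he h
    rw [← Finset.singleton_inj, ← toFinset_parts_equalPartsPartition (Finset.mem_filter.1 hd).1,
      h, toFinset_parts_equalPartsPartition]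
  · intro p hp
    obtain ⟨hres, hcard⟩ := Finset.mem_filter.1 hp
    obtain ⟨d, hparts⟩ := Finset.card_eq_one.1 hcard
    obtain ⟨hd, rfl⟩ := exists_equalPartsPartition_eq hparts
    have hmem : d ∈ (equalPartsPartition hd).parts :=
      Multiset.mem_toFinset.1 (hparts ▸ Finset.mem_singleton_self d)
    exact ⟨d, Finset.mem_filter.2 ⟨hd, (Finset.mem_filter.1 hres).2 d hmem⟩, rfl⟩

theorem sum_two_pow_modEq_four {ι : Type*} {s : Finset ι} {f : ι → ℕ}
    (hf : ∀ i ∈ s, f i ≠ 0) :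
    ∑ i ∈ s, 2 ^ f i ≡ 2 * #{i ∈ s | f i = 1} [MOD 4] := by
  rw [Finset.card_filter, Finset.mul_sum]
  refine Nat.ModEq.sum fun i hi => ?_
  split_ifs with h
  · rw [h]
    rfl
  · have hfi := hf i hi
    exact Nat.modEq_zero_iff_dvd.2 (pow_dvd_pow 2 (show 2 ≤ f i by omega))

theorem card_toFinset_parts_ne_zero {n : ℕ} (hn : n ≠ 0) (p : n.Partition) :
    p.parts.toFinset.card ≠ 0 := by
  rw [Ne, Finset.card_eq_zero, Multiset.toFinset_eq_empty]
  intro h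
  exact hn (by rw [← p.parts_sum, h, Multiset.sum_zero])

theorem biregOverpartitions_modEq_four (l₁ l₂ : ℕ) {n : ℕ} (hn : n ≠ 0) :
    biregOverpartitions l₁ l₂ n ≡ 2 * #{d ∈ n.divisors | ¬ l₁ ∣ d ∧ ¬ l₂ ∣ d} [MOD 4] := by
  rw [biregOverpartitions, ← Finset.sum_filter,
    ← card_filter_restricted_card_toFinset_parts_eq_one]
  exact sum_two_pow_modEq_four fun p _ => card_toFinset_parts_ne_zero hn p

theorem four_dvd_biregOverpartitions_iff (l₁ l₂ : ℕ) {n : ℕ} (hn : n ≠ 0) :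
    4 ∣ biregOverpartitions l₁ l₂ n ↔ Even #{d ∈ n.divisors | ¬ l₁ ∣ d ∧ ¬ l₂ ∣ d} := by
  rw [(biregOverpartitions_modEq_four l₁ l₂ hn).dvd_iff dvd_rfl, even_iff_two_dvd]
  omega

theorem even_card_filter_dvd_divisors {l n : ℕ} (hln : ¬ IsSquare (l * n)) :
    Even #{d ∈ n.divisors | l ∣ d} := by
  have hn : n ≠ 0 := by
    rintro rfl
    exact hln (mul_zero l ▸ IsSquare.zero)
  have hmul {d : ℕ} (hd : d ∣ n) : l * (n / d) * d = l * n := by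
    rw [mul_assoc, Nat.div_mul_cancel hd]
  rw [← ZMod.natCast_eq_zero_iff_even, Finset.card_eq_sum_ones, Nat.cast_sum]
  refine Finset.sum_involution (fun d _ => l * (n / d)) (fun _ _ => by decide) ?_ ?_ ?_
  · intro d hd _ hfix
    have hdn := Nat.dvd_of_mem_divisors (Finset.mem_filter.1 hd).1
    exact hln ⟨d, by rw [← hmul hdn, hfix]⟩
  · intro d hd
    obtain ⟨hdn, k, rfl⟩ := Finset.mem_filter.1 hd
    obtain ⟨⟨m, rfl⟩, -⟩ := Nat.mem_divisors.1 hdn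
    have hlk : 0 < l * k := Nat.pos_of_mem_divisors hdn
    rw [Nat.mul_div_cancel_left _ hlk]
    exact Finset.mem_filter.2 ⟨Nat.mem_divisors.2 ⟨⟨k, by ring⟩, hn⟩, dvd_mul_right _ _⟩
  · intro d hd
    obtain ⟨hdn, k, rfl⟩ := Finset.mem_filter.1 hd
    obtain ⟨⟨m, rfl⟩, -⟩ := Nat.mem_divisors.1 hdn
    have hlk : 0 < l * k := Nat.pos_of_mem_divisors hdn
    have hlm : 0 < l * m := by
      rw [mul_right_comm] at hn
      exact Nat.pos_of_ne_zero (left_ne_zero_of_mul hn)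
    rw [Nat.mul_div_cancel_left _ hlk, mul_right_comm, Nat.mul_div_cancel_left _ hlm]

theorem not_isSquare_of_mod_four_eq_three {m : ℕ} (hm : m % 4 = 3) : ¬ IsSquare m := by
  intro h
  have hcast : (m : ZMod 4) = 3 := (ZMod.natCast_eq_natCast_iff' m 3 4).2 hm
  exact (by decide : ¬ IsSquare (3 : ZMod 4)) (hcast ▸ h.map (Nat.castRingHom (ZMod 4)))

theorem B52_mod4_4n3_general {l₁ l₂ N : ℕ} (h₁ : l₁ % 4 = 1) (h₂ : Even l₂) (hN : N % 4 = 3) :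
    4 ∣ biregOverpartitions l₁ l₂ N := by
  rw [four_dvd_biregOverpartitions_iff l₁ l₂ (by omega)]
  have hall : Even #N.divisors := by
    have hsq : ¬ IsSquare (1 * N) := not_isSquare_of_mod_four_eq_three (by omega)
    simpa only [one_dvd, Finset.filter_true] using even_card_filter_dvd_divisors hsq
  have hmultiples : Even #{d ∈ N.divisors | l₁ ∣ d} :=
    even_card_filter_dvd_divisors
      (not_isSquare_of_mod_four_eq_three (by rw [Nat.mul_mod, h₁, hN]))
  have hfilter : {d ∈ N.divisors | ¬ l₁ ∣ d ∧ ¬ l₂ ∣ d} = {d ∈ N.divisors | ¬ l₁ ∣ d} := by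
    refine Finset.filter_congr fun d hd => and_iff_left fun h => ?_
    have : 2 ∣ N := (h₂.two_dvd.trans h).trans (Nat.dvd_of_mem_divisors hd)
    omega
  rw [← Finset.card_filter_add_card_filter_not (l₁ ∣ ·)] at hall
  rw [hfilter]
  exact (Nat.even_add.1 hall).1 hmultiples

theorem B52_mod4_4n3 (n : ℕ) : 4 ∣ biregOverpartitions 5 2 (4 * n + 3) :=
  B52_mod4_4n3_general rfl even_two (by omega)
end

section
/- For all integers n ≥ 0, the number of (8,3)-biregular overpartitions of 36n+33 satisfies B̄_{8,3}(36n+33) ≡ 0 (mod 3). -/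
/-!
Write `θ₄ = ∑ k : ℤ, (-1) ^ k * q ^ k ^ 2`. By Gauss's identity the generating function of all
overpartitions is `P = 1 / θ₄(q)`, so by inclusion–exclusion that of the `(8, 3)`-biregular ones is
`θ₄(q ^ 8) * θ₄(q ^ 3) / (θ₄(q) * θ₄(q ^ 24))`. Modulo `3`, where `f(q ^ 3) = f(q) ^ 3`, this is
`θ₄(q) ^ 2 / θ₄(q ^ 8) ^ 2 = θ₄(q) ^ 2 / (θ₃ * θ₄)(q ^ 4)`. Since
`θ₄(q) = θ₃(q ^ 4) - q * θ₂(q ^ 4)`, extracting the exponents `4 * m + 1` leaves `θ₂ * P`.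

Since `P(q) = θ₄(q) ^ 2 * P(q ^ 3)` modulo `3`, extracting the exponents `3 * m + 2` from `θ₂ * P`
only requires the `3`-dissection of `θ₂ * θ₄ ^ 2`. As `θ₄ ^ 4 = 1 + q * θ₂ ^ 4` modulo `3`, its
part in this residue class is `-q ^ 2 * θ₄(q ^ 3) ^ 2 * θ₂(q ^ 9)`. What remains is
`-θ₄(q) ^ 2 * θ₂(q ^ 3) * P(q) = -θ₄(q) * θ₂(q ^ 3)`, which has no exponent `≡ 2` modulo `3`
because `2` is not a square. Finally `36 * n + 33 = 4 * (3 * (3 * n + 2) + 2) + 1`.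

The relation modulo `3` between the fourth powers of the theta series amounts to
`∑ k l : ℤ, q ^ (k ^ 2 + k * l + l ^ 2) = 1`, which holds because the rotation of order `3` of the
hexagonal lattice fixes only the origin.
-/

namespace Overpartition

open PowerSeries

section CountingSeries

variable {ι κ : Type*} (R : Type*) [CommRing R]

/-- The series `∑ i, q ^ e i`, encoded through its coefficients: `q ^ n` is weighted by the number
of indices `i` with `e i = n`, which is meaningful when `e` is proper. -/
noncomputable def countingSeries (e : ι → ℤ) : R⟦X⟧ :=
  PowerSeries.mk fun n ↦ ((e ⁻¹' {(n : ℤ)}).ncard : R)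

/-- Exponents `e` for which `∑ i, q ^ e i` is a well-defined power series: no negative exponent,
and finitely many below any bound. -/
structure IsProper (e : ι → ℤ) : Prop where
  nonneg : ∀ i, 0 ≤ e i
  finite_le : ∀ n, {i | e i ≤ n}.Finite

variable {R} {e : ι → ℤ} {e' : κ → ℤ}

theorem coeff_countingSeries (e : ι → ℤ) (n : ℕ) :
    coeff n (countingSeries R e) = ((e ⁻¹' {(n : ℤ)}).ncard : R) := coeff_mk _ _

namespace IsProper

theorem finite_preimage (he : IsProper e) (n : ℤ) : (e ⁻¹' {n}).Finite :=
  (he.finite_le n).subset fun _ hi ↦ le_of_eq hi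

theorem add (he : IsProper e) (he' : IsProper e') :
    IsProper fun p : ι × κ ↦ e p.1 + e' p.2 where
  nonneg _ := add_nonneg (he.nonneg _) (he'.nonneg _)
  finite_le n := ((he.finite_le n).prod (he'.finite_le n)).subset fun _ hp ↦
    ⟨(le_add_of_nonneg_right (he'.nonneg _)).trans hp,
      (le_add_of_nonneg_left (he.nonneg _)).trans hp⟩

theorem const_mul (he : IsProper e) {a : ℤ} (ha : 0 < a) : IsProper fun i ↦ a * e i where
  nonneg i := mul_nonneg ha.le (he.nonneg i)
  finite_le n := (he.finite_le n).subset fun i hi ↦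
    (le_mul_of_one_le_left (he.nonneg i) ha).trans hi

end IsProper

theorem X_pow_dvd_countingSeries_sub_sum (he : ∀ i, 0 ≤ e i) {s : Finset ι} {n : ℕ}
    (hs : ∀ i, e i < n → i ∈ s) :
    (X : R⟦X⟧) ^ n ∣ countingSeries R e - ∑ i ∈ s, X ^ (e i).toNat := by
  classical
  refine X_pow_dvd_iff.2 fun m hm ↦ ?_
  have hfiber : e ⁻¹' {(m : ℤ)} = ↑(s.filter fun i ↦ m = (e i).toNat) := by
    ext i
    have := he i
    have := hs i
    simp only [Set.mem_preimage, Set.mem_singleton_iff, Finset.coe_filter, Set.mem_ofPred_eq]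
    grind
  rw [map_sub, coeff_countingSeries, hfiber, Set.ncard_coe_finset]
  simp [coeff_X_pow]

theorem eq_of_forall_X_pow_dvd_sub {f g : R⟦X⟧} (h : ∀ n, X ^ n ∣ f - g) : f = g := by
  ext n
  simpa [sub_eq_zero] using X_pow_dvd_iff.1 (h (n + 1)) n n.lt_succ_self

theorem countingSeries_add (he : IsProper e) (he' : IsProper e') :
    countingSeries R (fun p : ι × κ ↦ e p.1 + e' p.2)
      = countingSeries R e * countingSeries R e' := by
  refine eq_of_forall_X_pow_dvd_sub fun n ↦ ?_
  set s := (he.finite_le n).toFinset with hs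
  set t := (he'.finite_le n).toFinset with ht
  have hsum : ∑ p ∈ s ×ˢ t, (X : R⟦X⟧) ^ (e p.1 + e' p.2).toNat
      = (∑ i ∈ s, X ^ (e i).toNat) * ∑ j ∈ t, X ^ (e' j).toNat := by
    simp_rw [Finset.sum_mul_sum, Finset.sum_product,
      Int.toNat_add (he.nonneg _) (he'.nonneg _), pow_add]
  have hst := X_pow_dvd_countingSeries_sub_sum (R := R) (he.add he').nonneg (s := s ×ˢ t) (n := n)
    fun p hp ↦ by
      have := he.nonneg p.1
      have := he'.nonneg p.2
      simp only [hs, ht, Finset.mem_product, Set.Finite.mem_toFinset, Set.mem_ofPred_eq]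
      omega
  have hs := X_pow_dvd_countingSeries_sub_sum (R := R) he.nonneg (s := s) (n := n)
    fun i hi ↦ by simpa [hs] using hi.le
  have ht := X_pow_dvd_countingSeries_sub_sum (R := R) he'.nonneg (s := t) (n := n)
    fun j hj ↦ by simpa [ht] using hj.le
  rw [hsum] at hst
  convert! (hst.sub (hs.mul_right (countingSeries R e'))).sub
    (ht.mul_left (∑ i ∈ s, X ^ (e i).toNat)) using 1
  ring

theorem countingSeries_const_mul (e : ι → ℤ) {p : ℕ} (hp : p ≠ 0) :
    countingSeries R (fun i ↦ p * e i) = expand p hp (countingSeries R e) := by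
  ext n
  rw [coeff_expand]
  split_ifs with hn
  · obtain ⟨m, rfl⟩ := hn
    rw [Nat.mul_div_cancel_left _ (Nat.pos_of_ne_zero hp)]
    simp only [coeff_countingSeries, Set.preimage, Set.mem_singleton_iff, Nat.cast_mul,
      mul_right_inj' (Nat.cast_ne_zero (R := ℤ).2 hp)]
  · have hempty : (fun i ↦ p * e i) ⁻¹' {(n : ℤ)} = ∅ :=
      Set.eq_empty_of_forall_notMem fun i hi ↦ hn (Int.natCast_dvd_natCast.1 ⟨e i, hi.symm⟩)
    rw [coeff_countingSeries, hempty, Set.ncard_empty, Nat.cast_zero]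

theorem countingSeries_add_const (he : ∀ i, 0 ≤ e i) (m : ℕ) :
    countingSeries R (fun i ↦ e i + m) = X ^ m * countingSeries R e := by
  ext n
  rw [coeff_X_pow_mul', coeff_countingSeries]
  split_ifs with hmn
  · simp only [coeff_countingSeries, Set.preimage, Set.mem_singleton_iff, Nat.cast_sub hmn,
      eq_sub_iff_add_eq]
  · have hempty : (fun i ↦ e i + m) ⁻¹' {(n : ℤ)} = ∅ :=
      Set.eq_empty_of_forall_notMem fun i (hi : e i + m = n) ↦ by
        have := he i
        omega
    rw [hempty, Set.ncard_empty, Nat.cast_zero]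

theorem countingSeries_eq_add {α β : Type*} (he : IsProper e) {σ : α → ι} {τ : β → ι}
    (hστ : (Sum.elim σ τ).Bijective) {e₁ : α → ℤ} {e₂ : β → ℤ} (h₁ : ∀ a, e (σ a) = e₁ a)
    (h₂ : ∀ b, e (τ b) = e₂ b) :
    countingSeries R e = countingSeries R e₁ + countingSeries R e₂ := by
  obtain rfl : e ∘ σ = e₁ := funext h₁
  obtain rfl : e ∘ τ = e₂ := funext h₂
  obtain ⟨hσ, hτ, hne⟩ := Sum.elim_injective.1 hστ.injective
  have hrange : Set.range τ = (Set.range σ)ᶜ := by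
    refine (IsCompl.compl_eq ⟨Set.disjoint_range_iff.2 hne, codisjoint_iff.2 ?_⟩).symm
    exact (Set.Sum.elim_range σ τ).symm.trans hστ.surjective.range_eq
  ext n
  set s := e ⁻¹' {(n : ℤ)} with hs
  have hcard : s.ncard = (σ ⁻¹' s).ncard + (τ ⁻¹' s).ncard := by
    rw [← Set.ncard_image_of_injective _ hσ, ← Set.ncard_image_of_injective _ hτ,
      Set.image_preimage_eq_inter_range, Set.image_preimage_eq_inter_range, hrange,
      ← Set.sdiff_eq, Set.ncard_inter_add_ncard_sdiff_eq_ncard _ _ (he.finite_preimage n)]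
  simp only [coeff_countingSeries, map_add, Set.preimage_comp, ← hs, hcard, Nat.cast_add]

theorem ncard_modEq_ncard_inter_fixedPoints {p : ℕ} [Fact p.Prime] {f : ι → ι} (hf : f^[p] = id)
    {s : Set ι} (hs : s.Finite) (hfs : Set.MapsTo f s s) :
    s.ncard ≡ (s ∩ Function.fixedPoints f).ncard [MOD p] := by
  classical
  have := hs.fintype
  let g : Function.End s := hfs.restrict
  have hiter : hfs.restrict^[p] = id := by
    ext i
    rw [hfs.iterate_restrict, Set.MapsTo.val_restrict_apply, hf, id, id]
  have hg : g ^ p ^ 1 = 1 := by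
    rw [pow_one]
    exact (hom_coe_pow (fun g : Function.End s ↦ g) rfl (fun _ _ ↦ rfl) g p).trans hiter
  have hfix : Subtype.val '' Function.fixedPoints g = s ∩ Function.fixedPoints f := by
    ext i
    simp [Function.IsFixedPt, Subtype.ext_iff, g, and_comm]
  have hmod := Equiv.Perm.card_fixedPoints_modEq hg
  rwa [← Nat.card_eq_fintype_card, ← Nat.card_eq_fintype_card, Nat.card_coe_set_eq,
    Nat.card_coe_set_eq, ← Set.ncard_image_of_injective _ Subtype.val_injective, hfix] at hmod

theorem countingSeries_eq_X_pow_of_fixedPoints_eq_singleton {p : ℕ} [Fact p.Prime] [CharP R p]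
    (he : IsProper e) {f : ι → ι} (hf : f^[p] = id) (hef : ∀ i, e (f i) = e i) {i₀ : ι}
    (hi₀ : Function.fixedPoints f = {i₀}) :
    countingSeries R e = X ^ (e i₀).toNat := by
  ext n
  have hmod := ncard_modEq_ncard_inter_fixedPoints hf (he.finite_preimage n)
    fun i hi ↦ (hef i).trans hi
  rw [coeff_countingSeries, (CharP.natCast_eq_natCast R p).2 hmod, hi₀, coeff_X_pow]
  have := he.nonneg i₀
  split_ifs with hn
  · rw [Set.inter_eq_right.2 (by simp [hn, this]), Set.ncard_singleton, Nat.cast_one]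
  · have hnot : i₀ ∉ e ⁻¹' {(n : ℤ)} := fun (hi : e i₀ = n) ↦ hn (by simp [hi])
    rw [Set.inter_singleton_eq_empty.2 hnot, Set.ncard_empty, Nat.cast_zero]

end CountingSeries

section Theta

variable (R : Type*) [CommRing R]

/-- Jacobi's `θ₃(q) = ∑ k : ℤ, q ^ k ^ 2`. -/
noncomputable def theta₃ : R⟦X⟧ := countingSeries R fun k : ℤ ↦ k ^ 2

/-- `∑ k : ℤ, q ^ (k * (k + 1))`, which is Jacobi's `θ₂(q)` without its factor `q ^ (1 / 4)`. -/
noncomputable def theta₂ : R⟦X⟧ := countingSeries R fun k : ℤ ↦ k * (k + 1)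

/-- Jacobi's `θ₄(q) = ∑ k : ℤ, (-1) ^ k * q ^ k ^ 2`, encoded as `θ₃(-q)`. -/
noncomputable def theta₄ : R⟦X⟧ := evalNegHom (theta₃ R)

variable {R}

theorem isProper_sq : IsProper fun k : ℤ ↦ k ^ 2 where
  nonneg := sq_nonneg
  finite_le n := (Set.finite_Icc (-n) n).subset fun k (hk : k ^ 2 ≤ n) ↦
    ⟨by nlinarith, by nlinarith⟩

theorem isProper_mul_add_one : IsProper fun k : ℤ ↦ k * (k + 1) where
  nonneg k := by rcases lt_or_ge k 0 with hk | hk <;> nlinarith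
  finite_le n := (isProper_sq.finite_le (2 * n + 1)).subset fun k (hk : k * (k + 1) ≤ n) ↦
    show k ^ 2 ≤ 2 * n + 1 by linarith [sq_nonneg (k + 1)]

theorem coeff_evalNegHom (f : R⟦X⟧) (n : ℕ) :
    coeff n (evalNegHom f) = (-1) ^ n * coeff n f := coeff_rescale f (-1) n

theorem evalNegHom_expand_of_odd {p : ℕ} (hp : Odd p) (f : R⟦X⟧) :
    evalNegHom (expand p hp.pos.ne' f) = expand p hp.pos.ne' (evalNegHom f) := by
  ext n
  simp only [coeff_evalNegHom, coeff_expand]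
  split_ifs with hn
  · obtain ⟨m, rfl⟩ := hn
    rw [Nat.mul_div_cancel_left _ hp.pos, pow_mul, hp.neg_one_pow]
  · rw [mul_zero]

theorem evalNegHom_expand_of_even {p : ℕ} (hp : Even p) (hp₀ : p ≠ 0) (f : R⟦X⟧) :
    evalNegHom (expand p hp₀ f) = expand p hp₀ f := by
  ext n
  rw [coeff_evalNegHom, coeff_expand]
  split_ifs with hn
  · rw [(hp.trans_dvd hn).neg_one_pow, one_mul]
  · rw [mul_zero]

theorem evalNegHom_countingSeries_of_even {ι : Type*} {e : ι → ℤ} (he : ∀ i, Even (e i)) :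
    evalNegHom (countingSeries R e) = countingSeries R e := by
  ext n
  rw [coeff_evalNegHom, coeff_countingSeries]
  rcases n.even_or_odd with hn | hn
  · rw [hn.neg_one_pow, one_mul]
  · have hempty : e ⁻¹' {(n : ℤ)} = ∅ := Set.eq_empty_of_forall_notMem fun i (hi : e i = n) ↦
      Nat.not_even_iff_odd.2 hn ((Int.even_coe_nat n).1 (hi ▸ he i))
    rw [hempty, Set.ncard_empty, Nat.cast_zero, mul_zero]

theorem evalNegHom_theta₄ : evalNegHom (theta₄ R) = theta₃ R := by
  ext n
  rw [theta₄, coeff_evalNegHom, coeff_evalNegHom, ← mul_assoc, ← mul_pow, neg_one_mul, neg_neg,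
    one_pow, one_mul]

theorem evalNegHom_theta₂ : evalNegHom (theta₂ R) = theta₂ R :=
  evalNegHom_countingSeries_of_even Int.even_mul_succ_self

theorem theta₃_eq :
    theta₃ R = expand 4 four_ne_zero (theta₃ R) + X * expand 4 four_ne_zero (theta₂ R) := by
  have hparity : (Sum.elim (fun k : ℤ ↦ 2 * k) fun k ↦ 2 * k + 1).Bijective :=
    ⟨Sum.elim_injective.2 ⟨fun _ _ h ↦ by grind, fun _ _ h ↦ by grind, fun _ _ h ↦ by grind⟩,
      fun k ↦ by
        rcases k.even_or_odd' with ⟨m, rfl | rfl⟩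
        exacts [⟨.inl m, rfl⟩, ⟨.inr m, rfl⟩]⟩
  have hpronic := isProper_mul_add_one.const_mul (a := (4 : ℕ)) (by norm_num)
  conv_lhs => rw [theta₃, countingSeries_eq_add isProper_sq hparity
    (e₁ := fun k ↦ (4 : ℕ) * k ^ 2) (e₂ := fun k ↦ (4 : ℕ) * (k * (k + 1)) + (1 : ℕ))
    (fun k ↦ by push_cast; ring) (fun k ↦ by push_cast; ring),
    countingSeries_add_const hpronic.nonneg, countingSeries_const_mul _ four_ne_zero,
    countingSeries_const_mul _ four_ne_zero, pow_one]
  rfl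

theorem theta₄_eq :
    theta₄ R = expand 4 four_ne_zero (theta₃ R) - X * expand 4 four_ne_zero (theta₂ R) := by
  conv_lhs => rw [theta₄, theta₃_eq]
  simp only [map_add, map_mul, evalNegHom_X, evalNegHom_expand_of_even (by decide : Even 4)]
  ring

end Theta

section ThetaRelations

variable {R : Type*} [CommRing R]

theorem theta₃_sq :
    theta₃ R ^ 2
      = expand 2 two_ne_zero (theta₃ R) ^ 2 + X * expand 2 two_ne_zero (theta₂ R) ^ 2 := by
  have hlattice : (Sum.elim (fun p : ℤ × ℤ ↦ (p.1 + p.2, p.1 - p.2))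
      fun p : ℤ × ℤ ↦ (p.1 + p.2 + 1, p.1 - p.2)).Bijective := by
    refine ⟨Sum.elim_injective.2
      ⟨fun _ _ h ↦ by grind, fun _ _ h ↦ by grind, fun _ _ h ↦ by grind⟩, fun ⟨k, l⟩ ↦ ?_⟩
    rcases (k + l).even_or_odd' with ⟨m, hm | hm⟩
    exacts [⟨.inl (m, m - l), by grind⟩, ⟨.inr (m, m - l), by grind⟩]
  have hsq := isProper_sq.const_mul (a := (2 : ℕ)) (by norm_num)
  have hpronic := isProper_mul_add_one.const_mul (a := (2 : ℕ)) (by norm_num)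
  rw [sq, theta₃, ← countingSeries_add isProper_sq isProper_sq,
    countingSeries_eq_add (isProper_sq.add isProper_sq) hlattice
    (e₁ := fun p ↦ (2 : ℕ) * p.1 ^ 2 + (2 : ℕ) * p.2 ^ 2)
    (e₂ := fun p ↦ (2 : ℕ) * (p.1 * (p.1 + 1)) + (2 : ℕ) * (p.2 * (p.2 + 1)) + (1 : ℕ))
    (fun p ↦ by push_cast; ring) (fun p ↦ by push_cast; ring),
    countingSeries_add_const (hpronic.add hpronic).nonneg, countingSeries_add hsq hsq,
    countingSeries_add hpronic hpronic, countingSeries_const_mul _ two_ne_zero,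
    countingSeries_const_mul _ two_ne_zero, pow_one, ← sq, ← sq]
  rfl

theorem theta₄_sq :
    theta₄ R ^ 2
      = expand 2 two_ne_zero (theta₃ R) ^ 2 - X * expand 2 two_ne_zero (theta₂ R) ^ 2 := by
  rw [theta₄, ← map_pow, theta₃_sq]
  simp only [map_add, map_mul, map_pow, evalNegHom_X, evalNegHom_expand_of_even even_two]
  ring

theorem theta₃_mul_theta₄ :
    theta₃ R * theta₄ R = expand 2 two_ne_zero (theta₄ R) ^ 2 := by
  have hexpand (f : R⟦X⟧) :
      expand 4 four_ne_zero f = expand 2 two_ne_zero (expand 2 two_ne_zero f) :=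
    expand_mul 2 two_ne_zero 2 two_ne_zero f
  rw [← map_pow, theta₄_sq, theta₄_eq]
  nth_rw 1 [theta₃_eq]
  simp only [hexpand, map_sub, map_mul, map_pow, expand_X]
  ring

theorem isProper_sq_add_mul_add_sq : IsProper fun p : ℤ × ℤ ↦ p.1 ^ 2 + p.1 * p.2 + p.2 ^ 2 where
  nonneg p := by linarith [sq_nonneg (p.1 + p.2), sq_nonneg p.1, sq_nonneg p.2]
  finite_le n := ((isProper_sq.finite_le (2 * n)).prod (isProper_sq.finite_le (2 * n))).subset
    fun p (hp : p.1 ^ 2 + p.1 * p.2 + p.2 ^ 2 ≤ n) ↦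
      ⟨show p.1 ^ 2 ≤ 2 * n by linarith [sq_nonneg (p.1 + p.2), sq_nonneg p.2],
        show p.2 ^ 2 ≤ 2 * n by linarith [sq_nonneg (p.1 + p.2), sq_nonneg p.1]⟩

theorem countingSeries_sq_add_mul_add_sq :
    countingSeries R (fun p : ℤ × ℤ ↦ p.1 ^ 2 + p.1 * p.2 + p.2 ^ 2)
      = theta₃ R * expand 3 three_ne_zero (theta₃ R)
        + X * (theta₂ R * expand 3 three_ne_zero (theta₂ R)) := by
  have hlattice : (Sum.elim (fun p : ℤ × ℤ ↦ (p.1 - p.2, 2 * p.2))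
      fun p : ℤ × ℤ ↦ (p.1 - p.2, 2 * p.2 + 1)).Bijective := by
    refine ⟨Sum.elim_injective.2
      ⟨fun _ _ h ↦ by grind, fun _ _ h ↦ by grind, fun _ _ h ↦ by grind⟩, fun ⟨k, l⟩ ↦ ?_⟩
    rcases l.even_or_odd' with ⟨m, hm | hm⟩
    exacts [⟨.inl (k + m, m), by grind⟩, ⟨.inr (k + m, m), by grind⟩]
  have hsq := isProper_sq.const_mul (a := (3 : ℕ)) (by norm_num)
  have hpronic := isProper_mul_add_one.const_mul (a := (3 : ℕ)) (by norm_num)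
  rw [countingSeries_eq_add isProper_sq_add_mul_add_sq hlattice
    (e₁ := fun p ↦ p.1 ^ 2 + (3 : ℕ) * p.2 ^ 2)
    (e₂ := fun p ↦ p.1 * (p.1 + 1) + (3 : ℕ) * (p.2 * (p.2 + 1)) + (1 : ℕ))
    (fun p ↦ by push_cast; ring) (fun p ↦ by push_cast; ring),
    countingSeries_add_const (isProper_mul_add_one.add hpronic).nonneg,
    countingSeries_add isProper_sq hsq, countingSeries_add isProper_mul_add_one hpronic,
    countingSeries_const_mul _ three_ne_zero, countingSeries_const_mul _ three_ne_zero, pow_one]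
  rfl

theorem countingSeries_sq_add_mul_add_sq_of_charP_three [CharP R 3] :
    countingSeries R (fun p : ℤ × ℤ ↦ p.1 ^ 2 + p.1 * p.2 + p.2 ^ 2) = 1 := by
  have hfix : Function.fixedPoints (fun p : ℤ × ℤ ↦ (p.2, -p.1 - p.2)) = {0} := by
    ext ⟨k, l⟩
    simp only [Function.mem_fixedPoints, Function.IsFixedPt, Prod.mk.injEq, Set.mem_singleton_iff,
      Prod.mk_eq_zero]
    omega
  simpa using countingSeries_eq_X_pow_of_fixedPoints_eq_singleton (R := R) (p := 3)
    isProper_sq_add_mul_add_sq (f := fun p ↦ (p.2, -p.1 - p.2))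
    (funext fun p ↦ by simp [sub_eq_add_neg]) (fun p ↦ by ring) hfix

end ThetaRelations

theorem expand_zmod (p : ℕ) [Fact p.Prime] (f : (ZMod p)⟦X⟧) :
    expand p (NeZero.ne p) f = f ^ p := by
  have hfrob := MvPowerSeries.map_frobenius_expand (R := ZMod p) p (NeZero.ne p) (f := f)
  rwa [ZMod.frobenius_zmod, MvPowerSeries.map_id, RingHom.id_apply] at hfrob

theorem theta₃_pow_four_zmod_three : theta₃ (ZMod 3) ^ 4 + X * theta₂ (ZMod 3) ^ 4 = 1 := by
  rw [← countingSeries_sq_add_mul_add_sq_of_charP_three, countingSeries_sq_add_mul_add_sq,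
    expand_zmod 3, expand_zmod 3]
  ring

theorem theta₄_pow_four_zmod_three : theta₄ (ZMod 3) ^ 4 = 1 + X * theta₂ (ZMod 3) ^ 4 := by
  have h := congrArg evalNegHom theta₃_pow_four_zmod_three
  simp only [map_add, map_mul, map_pow, map_one, evalNegHom_X, evalNegHom_theta₂] at h
  rw [theta₄]
  linear_combination h

section Dissection

variable {R : Type*} [CommRing R] {d : ℕ} {r s : ZMod d} {f g : R⟦X⟧}

/-- Only powers `q ^ n` with `n ≡ r` modulo `d` occur in `f`: the notion behind `d`-dissections. -/
def SupportedOn (d : ℕ) (r : ZMod d) (f : R⟦X⟧) : Prop :=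
  ∀ n : ℕ, coeff n f ≠ 0 → (n : ZMod d) = r

namespace SupportedOn

theorem coeff_eq_zero (hf : SupportedOn d r f) {n : ℕ} (hn : (n : ZMod d) ≠ r) :
    coeff n f = 0 := not_imp_comm.1 (hf n) hn

theorem coeff_mul_add_eq_zero (hf : SupportedOn d r f) (n : ℕ) {m : ℕ} (hm : (m : ZMod d) ≠ r) :
    coeff (d * n + m) f = 0 := hf.coeff_eq_zero (by simpa using hm)

theorem add (hf : SupportedOn d r f) (hg : SupportedOn d r g) : SupportedOn d r (f + g) :=
  fun n hn ↦ by_contra fun hnr ↦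
    hn (by rw [map_add, hf.coeff_eq_zero hnr, hg.coeff_eq_zero hnr, add_zero])

theorem mul (hf : SupportedOn d r f) (hg : SupportedOn d s g) :
    SupportedOn d (r + s) (f * g) := fun n hn ↦ by
  rw [coeff_mul] at hn
  obtain ⟨⟨i, j⟩, hij, hne⟩ := Finset.exists_ne_zero_of_sum_ne_zero hn
  rw [← Finset.HasAntidiagonal.mem_antidiagonal.1 hij, Nat.cast_add, hf i (left_ne_zero_of_mul hne),
    hg j (right_ne_zero_of_mul hne)]

theorem evalNegHom (hf : SupportedOn d r f) : SupportedOn d r (evalNegHom f) :=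
  fun n hn ↦ hf n (right_ne_zero_of_mul (coeff_evalNegHom f n ▸ hn))

end SupportedOn

theorem supportedOn_expand {p : ℕ} (hp : p ≠ 0) (hdp : d ∣ p) (f : R⟦X⟧) :
    SupportedOn d 0 (expand p hp f) := fun n hn ↦
  (ZMod.natCast_eq_zero_iff n d).2 (hdp.trans (by_contra fun hpn ↦
    hn (coeff_expand_of_not_dvd p hp f hpn)))

theorem supportedOn_X_pow (d m : ℕ) : SupportedOn d m (X ^ m : R⟦X⟧) := fun n hn ↦ by
  rw [coeff_X_pow, Ne, ite_eq_right_iff] at hn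
  push Not at hn
  rw [hn.1]

theorem supportedOn_countingSeries_sub {ι κ : Type*} {e : ι → ℤ} {e' : κ → ℤ} {σ : κ → ι}
    (hσ : σ.Injective) (he' : ∀ k, e (σ k) = e' k)
    (he : ∀ i, i ∉ Set.range σ → (e i : ZMod d) = r) :
    SupportedOn d r (countingSeries R e - countingSeries R e') := fun n hn ↦ by
  obtain rfl : e ∘ σ = e' := funext he'
  by_contra hnr
  have hrange : e ⁻¹' {(n : ℤ)} ⊆ Set.range σ := fun i (hi : e i = n) ↦ by_contra fun hiσ ↦
    hnr (by rw [← he i hiσ, hi, Int.cast_natCast])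
  apply hn
  rw [map_sub, coeff_countingSeries, coeff_countingSeries, Set.preimage_comp,
    Set.ncard_preimage_of_injective_subset_range hσ hrange, sub_self]

theorem supportedOn_theta₄_sub :
    SupportedOn 3 1 (theta₄ R - expand 9 (by norm_num) (theta₄ R)) := by
  rw [theta₄, ← evalNegHom_expand_of_odd (by decide : Odd 9), ← map_sub, theta₃,
    ← countingSeries_const_mul]
  refine (supportedOn_countingSeries_sub (σ := fun k ↦ 3 * k)
    (mul_right_injective₀ three_ne_zero) (fun k ↦ by push_cast; ring) fun k hk ↦ ?_).evalNegHom
  have hk : (k : ZMod 3) ≠ 0 := fun h ↦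
    hk ((ZMod.intCast_zmod_eq_zero_iff_dvd k 3).1 h |>.imp fun _ ↦ Eq.symm)
  push_cast
  generalize (k : ZMod 3) = k at hk
  revert k
  decide

theorem supportedOn_theta₂_sub :
    SupportedOn 3 0 (theta₂ R - X ^ 2 * expand 9 (by norm_num) (theta₂ R)) := by
  have hpronic := isProper_mul_add_one.const_mul (a := (9 : ℕ)) (by norm_num)
  rw [theta₂, ← countingSeries_const_mul, ← countingSeries_add_const hpronic.nonneg]
  refine supportedOn_countingSeries_sub (σ := fun k ↦ 3 * k + 1)
    (fun k l h ↦ by grind) (fun k ↦ by push_cast; ring) fun k hk ↦ ?_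
  have hk : (k : ZMod 3) ≠ 1 := fun h ↦ by
    obtain ⟨l, hl⟩ := (ZMod.intCast_eq_intCast_iff_dvd_sub 1 k 3).1 (by simpa using h.symm)
    exact hk ⟨l, by push_cast at hl; linarith⟩
  push_cast
  generalize (k : ZMod 3) = k at hk
  revert k
  decide

theorem coeff_theta₄_mul_expand_three (f : R⟦X⟧) (n : ℕ) :
    coeff (3 * n + 2) (theta₄ R * expand 3 three_ne_zero f) = 0 := by
  have hf := supportedOn_expand (d := 3) three_ne_zero dvd_rfl f
  have h₀ := (supportedOn_expand (d := 3) (p := 9) (by norm_num) (by norm_num) (theta₄ R)).mul hf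
  have h₁ := supportedOn_theta₄_sub.mul hf
  rw [← sub_add_cancel (theta₄ R) (expand 9 (by norm_num) (theta₄ R)), add_mul, map_add,
    h₀.coeff_mul_add_eq_zero n (by decide), h₁.coeff_mul_add_eq_zero n (by decide), add_zero]

theorem expand_nine_zmod_three (f : (ZMod 3)⟦X⟧) : expand 9 (by norm_num) f = f ^ 9 := by
  rw [expand_mul 3 three_ne_zero 3 three_ne_zero f, expand_zmod 3, expand_zmod 3, ← pow_mul]

theorem theta₂_mul_theta₄_sq_dissection : ∃ h₀ h₁ : (ZMod 3)⟦X⟧,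
    SupportedOn 3 0 h₀ ∧ SupportedOn 3 1 h₁ ∧
      theta₂ (ZMod 3) * theta₄ (ZMod 3) ^ 2 = h₀ + h₁ - X ^ 2 * expand 3 three_ne_zero
        (theta₄ (ZMod 3) ^ 2 * expand 3 three_ne_zero (theta₂ (ZMod 3))) := by
  have ha := supportedOn_expand (d := 3) (p := 9) (by norm_num) (by norm_num) (theta₄ (ZMod 3))
  have hb := supportedOn_theta₄_sub (R := ZMod 3)
  have hc := (supportedOn_X_pow 3 2).mul
    (supportedOn_expand (d := 3) (p := 9) (by norm_num) (by norm_num) (theta₂ (ZMod 3)))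
  have hd := supportedOn_theta₂_sub (R := ZMod 3)
  have hac := (ha.mul hb).mul hc
  have hbd := (ha.mul hb).mul hd
  refine ⟨_, _, ((ha.mul ha).mul hd).add (hac.add hac), ((hb.mul hb).mul hc).add (hbd.add hbd), ?_⟩
  have hthree : (3 : (ZMod 3)⟦X⟧) = 0 := by
    rw [← map_ofNat (C (R := ZMod 3)) 3, show (3 : ZMod 3) = 0 from rfl, map_zero]
  have hX : X ^ 2 * theta₂ (ZMod 3) ^ 9
      = theta₂ (ZMod 3) * (theta₄ (ZMod 3) ^ 4 - 1) ^ 2 := by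
    rw [theta₄_pow_four_zmod_three]
    ring
  -- As `f(q ^ 3) = f ^ 3`, this is a polynomial identity given `X * θ₂ ^ 4 = θ₄ ^ 4 - 1`.
  simp only [expand_nine_zmod_three, expand_zmod 3]
  generalize theta₄ (ZMod 3) = x at *
  generalize theta₂ (ZMod 3) = y at *
  linear_combination (x ^ 18 - (x - x ^ 9) ^ 2 + x ^ 6) * hX
    + x ^ 2 * y * (1 - x ^ 4) ^ 2 * (x ^ 4 + x ^ 8) * hthree

theorem coeff_theta₂_mul_theta₄_sq_mul_expand (f : (ZMod 3)⟦X⟧) (n : ℕ) :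
    coeff (3 * n + 2) (theta₂ (ZMod 3) * theta₄ (ZMod 3) ^ 2 * expand 3 three_ne_zero f)
      = -coeff n (theta₄ (ZMod 3) ^ 2 * expand 3 three_ne_zero (theta₂ (ZMod 3)) * f) := by
  obtain ⟨h₀, h₁, hh₀, hh₁, h⟩ := theta₂_mul_theta₄_sq_dissection
  have hf := supportedOn_expand (d := 3) three_ne_zero dvd_rfl f
  rw [h, sub_mul, add_mul, map_sub, map_add, (hh₀.mul hf).coeff_mul_add_eq_zero n (by decide),
    (hh₁.mul hf).coeff_mul_add_eq_zero n (by decide), add_zero, zero_sub, mul_assoc, ← map_mul,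
    coeff_X_pow_mul, coeff_expand_mul]

end Dissection

section Gauss

open Finset

variable {R : Type*} [CommRing R]

/-- The `s`-th summand in the finite form `sum_gaussTerm` of Gauss's identity
`∏ i, (1 - q ^ i) / (1 + q ^ i) = ∑ k : ℤ, (-1) ^ k * q ^ k ^ 2`. -/
def gaussTerm (q : R) (n s : ℕ) : R :=
  (-1) ^ s * q ^ (s * (n + 1)) * (∏ i ∈ range s, (1 + q ^ i))
    * ∏ i ∈ Ico (s + 1) (n + 1), (1 - q ^ i)

/-- The certificate of Wilf–Zeilberger type for `gaussTerm`: its difference in `s` is the defect of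
the recurrence in `n` satisfied by the sums of `gaussTerm`. -/
def gaussCertificate (q : R) (n s : ℕ) : R :=
  (-1) ^ s * q ^ (s * (n + 1)) * (∏ i ∈ range s, (1 + q ^ i)) * ∏ i ∈ Ico s (n + 1), (1 - q ^ i)

theorem gaussTerm_succ_sub (q : R) {n s : ℕ} (hs : s ≤ n) :
    gaussTerm q (n + 1) s - (1 + q ^ (n + 1)) * gaussTerm q n s
      = gaussCertificate q n (s + 1) - gaussCertificate q n s := by
  simp only [gaussTerm, gaussCertificate]
  rw [prod_range_succ, prod_Ico_succ_top (by lia : s + 1 ≤ n + 1),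
    prod_eq_prod_Ico_succ_bot (by lia : s < n + 1)]
  ring

theorem gaussTerm_self_add_gaussCertificate (q : R) (n : ℕ) :
    gaussTerm q (n + 1) (n + 1) + gaussCertificate q n (n + 1)
      = 2 * (-1) ^ (n + 1) * q ^ (n + 1) ^ 2 * ∏ i ∈ range (n + 1), (1 + q ^ (i + 1)) := by
  simp only [gaussTerm, gaussCertificate, Ico_self, prod_empty]
  rw [prod_range_succ', prod_range_succ (fun i ↦ 1 + q ^ (i + 1))]
  ring

theorem sum_gaussTerm_succ (q : R) (n : ℕ) :
    ∑ s ∈ range (n + 1), gaussTerm q (n + 1) s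
      = (1 + q ^ (n + 1)) * ∑ s ∈ range (n + 1), gaussTerm q n s
        + gaussCertificate q n (n + 1) := by
  have hzero : gaussCertificate q n 0 = 0 := by
    simp [gaussCertificate, prod_range_succ']
  have htelescope := sum_range_sub (gaussCertificate q n) (n + 1)
  rw [hzero, sub_zero] at htelescope
  rw [← sub_eq_iff_eq_add', mul_sum, ← sum_sub_distrib, ← htelescope]
  exact sum_congr rfl fun s hs ↦ gaussTerm_succ_sub q (mem_range_succ_iff.1 hs)

theorem sum_gaussTerm (q : R) (n : ℕ) :
    ∑ s ∈ range (n + 1), gaussTerm q n s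
      = (∏ i ∈ range n, (1 + q ^ (i + 1)))
        * (2 * ∑ k ∈ range (n + 1), (-1) ^ k * q ^ k ^ 2 - 1) := by
  induction n with
  | zero =>
    norm_num [gaussTerm]
  | succ n ih =>
    have hboundary := gaussTerm_self_add_gaussCertificate q n
    rw [sum_range_succ, sum_gaussTerm_succ, ih, sum_range_succ _ (n + 1)]
    rw [prod_range_succ] at *
    linear_combination hboundary

theorem X_pow_dvd_theta₄_sub (n : ℕ) :
    (X : R⟦X⟧) ^ (n + 1) ∣ theta₄ R - (2 * ∑ k ∈ range (n + 1), (-1) ^ k * X ^ k ^ 2 - 1) := by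
  have hdvd := X_pow_dvd_countingSeries_sub_sum (R := R) sq_nonneg (s := Icc (-n : ℤ) n)
    (n := n + 1) fun k hk ↦ by
      push_cast at hk
      rw [mem_Icc]
      constructor <;> nlinarith
  have hsum : evalNegHom (∑ k ∈ Icc (-n : ℤ) n, (X : R⟦X⟧) ^ (k ^ 2).toNat)
      = 2 * ∑ k ∈ range (n + 1), (-1) ^ k * X ^ k ^ 2 - 1 := by
    have hterm (k : ℕ) : evalNegHom ((X : R⟦X⟧) ^ ((k : ℤ) ^ 2).toNat) = (-1) ^ k * X ^ k ^ 2 := by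
      rw [← Nat.cast_pow, Int.toNat_natCast, map_pow, evalNegHom_X, neg_pow,
        neg_one_pow_congr (Nat.even_pow' two_ne_zero)]
    rw [sum_Icc_of_even_eq_range fun k ↦ by rw [neg_sq], map_sub, nsmul_eq_mul, map_mul, map_sum,
      Nat.cast_ofNat, map_ofNat]
    simp [hterm]
  have hneg := map_dvd evalNegHom hdvd
  rwa [map_sub, hsum, map_pow, evalNegHom_X, neg_pow, IsUnit.mul_left_dvd (by simp)] at hneg

theorem X_pow_dvd_prod_mul_theta₄_sub (n : ℕ) :
    (X : R⟦X⟧) ^ (n + 1) ∣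
      (∏ i ∈ range n, (1 + X ^ (i + 1))) * theta₄ R - ∏ i ∈ range n, (1 - X ^ (i + 1)) := by
  have hgauss := sum_gaussTerm (X : R⟦X⟧) n
  have htail : (X : R⟦X⟧) ^ (n + 1) ∣ ∑ s ∈ range n, gaussTerm X n (s + 1) :=
    dvd_sum fun s _ ↦ (((pow_dvd_pow X (Nat.le_mul_of_pos_left _ s.succ_pos)).mul_left _).mul_right
      _).mul_right _
  have hhead : gaussTerm (X : R⟦X⟧) n 0 = ∏ i ∈ range n, (1 - X ^ (i + 1)) := by
    simp [gaussTerm, prod_Ico_eq_prod_range, add_comm]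
  rw [sum_range_succ', hhead] at hgauss
  convert! ((X_pow_dvd_theta₄_sub n).mul_left (∏ i ∈ range n, (1 + X ^ (i + 1)))).add htail using 1
  linear_combination -hgauss

end Gauss

section OverpartitionSeries

open Finset Filter
open scoped PowerSeries.WithPiTopology

variable (R : Type*) [CommRing R]

/-- The generating function `(1 + q ^ i) / (1 - q ^ i)` of the overpartitions all of whose parts are
equal to `i`, for `i ≠ 0`. -/
noncomputable def overpartitionFactor (i : ℕ) : R⟦X⟧ :=
  (1 + X ^ i) * invOfUnit (1 - X ^ i) 1

/-- The generating function of the overpartitions whose parts lie in `S`: each part size is weighted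
by `2`, for the choice of overlining its first occurrence. -/
noncomputable def overpartitionSeries (S : Set ℕ) : R⟦X⟧ :=
  Nat.Partition.genFun fun i _ ↦ S.indicator 2 i

variable {R}

theorem isUnit_one_sub_X_pow {i : ℕ} (hi : i ≠ 0) : IsUnit (1 - X ^ i : R⟦X⟧) := by
  simp [isUnit_iff_constantCoeff, hi]

theorem overpartitionFactor_mul {i : ℕ} (hi : i ≠ 0) :
    overpartitionFactor R i * (1 - X ^ i) = 1 + X ^ i := by
  rw [overpartitionFactor, mul_assoc, mul_comm (invOfUnit _ _),
    mul_invOfUnit _ _ (by simp [hi]), mul_one]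

theorem expand_overpartitionFactor {p i : ℕ} (hp : p ≠ 0) (hi : i ≠ 0) :
    expand p hp (overpartitionFactor R i) = overpartitionFactor R (p * i) := by
  refine (isUnit_one_sub_X_pow (mul_ne_zero hp hi)).mul_right_cancel ?_
  have h := congrArg (expand p hp) (overpartitionFactor_mul (R := R) hi)
  rw [overpartitionFactor_mul (mul_ne_zero hp hi)]
  simpa only [map_mul, map_sub, map_add, map_one, map_pow, expand_X, ← pow_mul] using h

section Topology

variable [TopologicalSpace R]

theorem continuous_expand {p : ℕ} (hp : p ≠ 0) : Continuous (expand (R := R) p hp) :=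
  continuous_iff_continuousAt.2 fun f ↦
    (WithPiTopology.tendsto_iff_coeff_tendsto _ _ _ _).2 fun n ↦ by
      simp only [coeff_expand]
      split_ifs
      exacts [(WithPiTopology.continuous_coeff R _).continuousAt, tendsto_const_nhds]

variable [T2Space R] [IsTopologicalRing R]

theorem one_add_tsum_eq_overpartitionFactor {i : ℕ} (hi : i ≠ 0) :
    1 + ∑' j, (2 : R) • (X : R⟦X⟧) ^ (i * (j + 1)) = overpartitionFactor R i := by
  refine (isUnit_one_sub_X_pow hi).mul_right_cancel ?_
  have hgeom := WithPiTopology.tsum_pow_mul_one_sub_of_constantCoeff_eq_zero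
    (f := (X : R⟦X⟧) ^ i) (by simp [hi])
  have hsum := WithPiTopology.summable_pow_of_constantCoeff_eq_zero
    (f := (X : R⟦X⟧) ^ i) (by simp [hi])
  have hterm (j : ℕ) : (2 : R) • (X : R⟦X⟧) ^ (i * (j + 1)) = 2 * X ^ i * (X ^ i) ^ j := by
    rw [smul_eq_C_mul, map_ofNat]
    ring
  rw [overpartitionFactor_mul hi, tsum_congr hterm, hsum.tsum_mul_left]
  linear_combination 2 * X ^ i * hgeom

theorem hasProd_overpartitionSeries (S : Set ℕ) :
    HasProd (fun i ↦ S.mulIndicator (overpartitionFactor R) (i + 1)) (overpartitionSeries R S) := by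
  convert! Nat.Partition.hasProd_genFun (R := R) fun i _ ↦ S.indicator 2 i with i
  by_cases hi : i + 1 ∈ S
  · simp [hi, ← one_add_tsum_eq_overpartitionFactor]
  · simp [hi]

end Topology

theorem overpartitionSeries_mul (S T : Set ℕ) :
    overpartitionSeries R S * overpartitionSeries R T
      = overpartitionSeries R (S ∪ T) * overpartitionSeries R (S ∩ T) := by
  let _ : TopologicalSpace R := ⊥
  have : DiscreteTopology R := ⟨rfl⟩
  have h := (hasProd_overpartitionSeries (R := R) (S ∪ T)).mul (hasProd_overpartitionSeries (S ∩ T))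
  simp only [Set.mulIndicator_union_mul_inter_apply] at h
  exact ((hasProd_overpartitionSeries S).mul (hasProd_overpartitionSeries T)).unique h

theorem overpartitionSeries_empty : overpartitionSeries R ∅ = 1 := by
  let _ : TopologicalSpace R := ⊥
  have : DiscreteTopology R := ⟨rfl⟩
  refine (hasProd_overpartitionSeries ∅).unique ?_
  simp only [Set.mulIndicator_empty]
  exact hasProd_one

theorem expand_overpartitionSeries_univ {p : ℕ} (hp : p ≠ 0) :
    expand p hp (overpartitionSeries R Set.univ) = overpartitionSeries R {i | p ∣ i} := by
  let _ : TopologicalSpace R := ⊥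
  have : DiscreteTopology R := ⟨rfl⟩
  have hinj : (fun i ↦ p * (i + 1) - 1).Injective := fun i j hij ↦ by
    have := Nat.mul_pos (Nat.pos_of_ne_zero hp) i.succ_pos
    have := Nat.mul_pos (Nat.pos_of_ne_zero hp) j.succ_pos
    exact Nat.succ_injective (Nat.eq_of_mul_eq_mul_left (Nat.pos_of_ne_zero hp)
      (by simp only at hij; lia))
  refine ((hasProd_overpartitionSeries Set.univ).map _ (continuous_expand hp)).unique ?_
  convert! (hinj.hasProd_iff fun i hi ↦ Set.mulIndicator_of_notMem ?_ _).2
    (hasProd_overpartitionSeries (R := R) {i | p ∣ i}) using 1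
  · ext1 i
    have : p * (i + 1) - 1 + 1 = p * (i + 1) :=
      Nat.sub_add_cancel (Nat.mul_pos (Nat.pos_of_ne_zero hp) i.succ_pos)
    simp [this, expand_overpartitionFactor hp]
  · rintro ⟨j, hj⟩
    obtain _ | j := j
    · simp at hj
    · exact hi ⟨j, by simp [← hj]⟩

theorem X_pow_dvd_theta₄_mul_prod_sub_one (n : ℕ) :
    X ^ (n + 1) ∣ theta₄ R * ∏ i ∈ range n, overpartitionFactor R (i + 1) - 1 := by
  have hunit : IsUnit (∏ i ∈ range n, (1 - X ^ (i + 1) : R⟦X⟧)) :=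
    IsUnit.prod_iff.2 fun i _ ↦ isUnit_one_sub_X_pow i.succ_ne_zero
  have hprod : (∏ i ∈ range n, overpartitionFactor R (i + 1)) * ∏ i ∈ range n, (1 - X ^ (i + 1))
      = ∏ i ∈ range n, (1 + X ^ (i + 1)) := by
    rw [← prod_mul_distrib]
    exact prod_congr rfl fun i _ ↦ overpartitionFactor_mul i.succ_ne_zero
  rw [← hunit.dvd_mul_right]
  convert! X_pow_dvd_prod_mul_theta₄_sub (R := R) n using 1
  linear_combination theta₄ R * hprod

theorem theta₄_mul_overpartitionSeries_univ :
    theta₄ R * overpartitionSeries R Set.univ = 1 := by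
  let _ : TopologicalSpace R := ⊥
  have : DiscreteTopology R := ⟨rfl⟩
  have hlim := (hasProd_overpartitionSeries (R := R) Set.univ).tendsto_prod_nat.const_mul (theta₄ R)
  simp only [Set.mulIndicator_univ] at hlim
  refine tendsto_nhds_unique hlim ((WithPiTopology.tendsto_iff_coeff_tendsto _ _ _ _).2 fun m ↦ ?_)
  refine tendsto_atTop_of_eventually_const (i₀ := m) fun n hmn ↦ ?_
  have h := X_pow_dvd_iff.1 (X_pow_dvd_theta₄_mul_prod_sub_one (R := R) n) m (Nat.lt_succ_of_le hmn)
  rwa [map_sub, sub_eq_zero] at h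

theorem coeff_overpartitionSeries (S : Set ℕ) [DecidablePred (· ∈ S)] (n : ℕ) :
    coeff n (overpartitionSeries R S) =
      ((∑ p : Nat.Partition n,
        if ∀ x ∈ p.parts, x ∈ S then 2 ^ p.parts.toFinset.card else 0 : ℕ) : R) := by
  classical
  rw [overpartitionSeries, Nat.Partition.coeff_genFun, Nat.cast_sum]
  refine sum_congr rfl fun p _ ↦ ?_
  simp [Finsupp.prod, Set.indicator_apply, prod_ite_zero]

end OverpartitionSeries

section BiregularSeries

variable (R : Type*) [CommRing R]

/-- The generating function of `biregOverpartitions l1 l2`. -/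
noncomputable def biregSeries (l1 l2 : ℕ) : R⟦X⟧ :=
  PowerSeries.mk fun n ↦ (biregOverpartitions l1 l2 n : R)

variable {R}

theorem coeff_biregSeries (l1 l2 n : ℕ) :
    coeff n (biregSeries R l1 l2) = biregOverpartitions l1 l2 n := coeff_mk _ _

theorem biregSeries_eq (l1 l2 : ℕ) :
    biregSeries R l1 l2 = overpartitionSeries R ({i | l1 ∣ i} ∪ {i | l2 ∣ i})ᶜ := by
  classical
  ext n
  simp only [coeff_biregSeries, biregOverpartitions, coeff_overpartitionSeries,
    Set.mem_compl_iff, Set.mem_union, Set.mem_ofPred_eq, not_or]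

theorem expand_theta₄_mul_overpartitionSeries {p : ℕ} (hp : p ≠ 0) :
    expand p hp (theta₄ R) * overpartitionSeries R {i | p ∣ i} = 1 := by
  rw [← expand_overpartitionSeries_univ hp, ← map_mul, theta₄_mul_overpartitionSeries_univ, map_one]

theorem biregSeries_mul_theta₄ {l1 l2 : ℕ} (h : l1.Coprime l2) (h1 : l1 ≠ 0) (h2 : l2 ≠ 0) :
    biregSeries R l1 l2 * (theta₄ R * expand (l1 * l2) (mul_ne_zero h1 h2) (theta₄ R))
      = expand l1 h1 (theta₄ R) * expand l2 h2 (theta₄ R) := by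
  set A := {i | l1 ∣ i}
  set B := {i | l2 ∣ i}
  have hinter : A ∩ B = {i | l1 * l2 ∣ i} := by
    ext i
    exact ⟨fun ⟨hA, hB⟩ ↦ h.mul_dvd_of_dvd_of_dvd hA hB,
      fun hi ↦ ⟨dvd_of_mul_right_dvd hi, dvd_of_mul_left_dvd hi⟩⟩
  have hcompl := overpartitionSeries_mul (R := R) (A ∪ B)ᶜ (A ∪ B)
  rw [Set.compl_union_self, Set.compl_inter_self, overpartitionSeries_empty, mul_one,
    ← biregSeries_eq] at hcompl
  have hunion := overpartitionSeries_mul (R := R) A B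
  rw [hinter] at hunion
  have hall := theta₄_mul_overpartitionSeries_univ (R := R)
  have hA := expand_theta₄_mul_overpartitionSeries (R := R) h1
  have hB := expand_theta₄_mul_overpartitionSeries (R := R) h2
  have hAB := expand_theta₄_mul_overpartitionSeries (R := R) (mul_ne_zero h1 h2)
  set a := overpartitionSeries R A
  set b := overpartitionSeries R B
  set w := overpartitionSeries R (A ∪ B)
  set c := overpartitionSeries R {i | l1 * l2 ∣ i}
  set u := overpartitionSeries R Set.univ
  set x := expand l1 h1 (theta₄ R)
  set y := expand l2 h2 (theta₄ R)
  set z := expand (l1 * l2) (mul_ne_zero h1 h2) (theta₄ R)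
  set F := biregSeries R l1 l2
  calc F * (theta₄ R * z) = F * (theta₄ R * z) * ((x * a) * (y * b)) := by rw [hA, hB]; ring
    _ = (x * y) * (theta₄ R * (F * w)) * (z * c) := by
      linear_combination F * theta₄ R * z * x * y * hunion
    _ = x * y := by rw [hcompl, hall, hAB, mul_one, mul_one]

end BiregularSeries

section CongruenceModThree

variable {R : Type*} [CommRing R]

theorem theta₃_mul_evalNegHom_overpartitionSeries_univ :
    theta₃ R * evalNegHom (overpartitionSeries R Set.univ) = 1 := by
  rw [← evalNegHom_theta₄, ← map_mul, theta₄_mul_overpartitionSeries_univ, map_one]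

theorem coeff_theta₄_sq_mul_expand_four (f : R⟦X⟧) (n : ℕ) :
    coeff (4 * n + 1) (theta₄ R ^ 2 * expand 4 four_ne_zero f)
      = -2 * coeff n (theta₂ R * theta₃ R * f) := by
  have hsq : theta₄ R ^ 2 * expand 4 four_ne_zero f
      = expand 4 four_ne_zero (theta₃ R ^ 2 * f)
        + X ^ 2 * expand 4 four_ne_zero (theta₂ R ^ 2 * f)
        - X * expand 4 four_ne_zero (C 2 * (theta₂ R * theta₃ R * f)) := by
    rw [theta₄_eq, map_ofNat]
    simp only [map_mul, map_pow, map_ofNat]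
    ring
  have h₀ := supportedOn_expand (d := 4) four_ne_zero dvd_rfl (theta₃ R ^ 2 * f)
  have h₂ := (supportedOn_X_pow 4 2).mul
    (supportedOn_expand (d := 4) four_ne_zero dvd_rfl (theta₂ R ^ 2 * f))
  rw [hsq, map_sub, map_add, h₀.coeff_mul_add_eq_zero n (by decide),
    h₂.coeff_mul_add_eq_zero n (by decide), coeff_succ_X_mul, coeff_expand_mul, coeff_C_mul]
  ring

theorem biregSeries_eight_three :
    biregSeries (ZMod 3) 8 3 = theta₄ (ZMod 3) ^ 2 * expand 4 four_ne_zero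
      (evalNegHom (overpartitionSeries (ZMod 3) Set.univ)
        * overpartitionSeries (ZMod 3) Set.univ) := by
  set u := overpartitionSeries (ZMod 3) Set.univ
  set v := evalNegHom u
  set x := theta₄ (ZMod 3)
  set y := expand 8 (by norm_num) x
  set t := expand 4 four_ne_zero (v * u)
  have hB : biregSeries (ZMod 3) 8 3 * (x * y ^ 3) = y * x ^ 3 := by
    have h := biregSeries_mul_theta₄ (R := ZMod 3) (l1 := 8) (l2 := 3) (by norm_num) (by norm_num)
      (by norm_num)
    rwa [expand_mul 8 (by norm_num) 3 three_ne_zero, expand_zmod 3, map_pow] at h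
  have hu : x * u = 1 := theta₄_mul_overpartitionSeries_univ
  have hv : theta₃ (ZMod 3) * v = 1 := theta₃_mul_evalNegHom_overpartitionSeries_univ
  have hy : y ^ 2 = expand 4 four_ne_zero (theta₃ (ZMod 3) * x) := by
    rw [theta₃_mul_theta₄, map_pow]
    exact congrArg (· ^ 2) (expand_mul 4 four_ne_zero 2 two_ne_zero x)
  have ht : y ^ 2 * t = 1 := by
    rw [hy, ← map_mul, mul_mul_mul_comm, hv, hu, one_mul, map_one]
  set F := biregSeries (ZMod 3) 8 3
  calc F = F * (x * u) * (y ^ 2 * t) ^ 2 := by rw [hu, ht, one_pow, mul_one, mul_one]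
    _ = F * (x * y ^ 3) * (u * y * t ^ 2) := by ring
    _ = x ^ 2 * t * (x * u) * (y ^ 2 * t) := by rw [hB]; ring
    _ = x ^ 2 * t := by rw [hu, ht, mul_one, mul_one]

theorem coeff_four_mul_add_one_biregSeries_eight_three (n : ℕ) :
    coeff (4 * n + 1) (biregSeries (ZMod 3) 8 3)
      = coeff n (theta₂ (ZMod 3) * overpartitionSeries (ZMod 3) Set.univ) := by
  rw [biregSeries_eight_three, coeff_theta₄_sq_mul_expand_four, show (-2 : ZMod 3) = 1 from rfl,
    one_mul, mul_assoc, ← mul_assoc (theta₃ _), theta₃_mul_evalNegHom_overpartitionSeries_univ,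
    one_mul]

theorem coeff_theta₂_mul_overpartitionSeries_univ (n : ℕ) :
    coeff (3 * n + 2) (theta₂ (ZMod 3) * overpartitionSeries (ZMod 3) Set.univ)
      = -coeff n (theta₄ (ZMod 3) * expand 3 three_ne_zero (theta₂ (ZMod 3))) := by
  set u := overpartitionSeries (ZMod 3) Set.univ
  have hu := theta₄_mul_overpartitionSeries_univ (R := ZMod 3)
  have hcube : theta₂ (ZMod 3) * u
      = theta₂ (ZMod 3) * theta₄ (ZMod 3) ^ 2 * expand 3 three_ne_zero u := by
    rw [expand_zmod 3]
    linear_combination -theta₂ (ZMod 3) * u * (theta₄ (ZMod 3) * u + 1) * hu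
  have hcancel : theta₄ (ZMod 3) ^ 2 * expand 3 three_ne_zero (theta₂ (ZMod 3)) * u
      = theta₄ (ZMod 3) * expand 3 three_ne_zero (theta₂ (ZMod 3)) := by
    linear_combination theta₄ (ZMod 3) * expand 3 three_ne_zero (theta₂ (ZMod 3)) * hu
  rw [hcube, coeff_theta₂_mul_theta₄_sq_mul_expand, hcancel]

end CongruenceModThree

end Overpartition

open Overpartition

theorem B83_mod3_36n33 (n : ℕ) : 3 ∣ biregOverpartitions 8 3 (36 * n + 33) := by
  have hn : 36 * n + 33 = 4 * (3 * (3 * n + 2) + 2) + 1 := by ring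
  rw [← ZMod.natCast_eq_zero_iff, ← coeff_biregSeries, hn,
    coeff_four_mul_add_one_biregSeries_eight_three, coeff_theta₂_mul_overpartitionSeries_univ,
    coeff_theta₄_mul_expand_three, neg_zero]
end
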